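/- arXiv:2006.06230 — 3 statements merged into one kernel-verified Lean document; each statement's English description precedes it below -/
import Mathlib

section
/- For any irreducible closed subvariety X of the torus G_m^n over ℚ̄, the set X^{oa} is a Zariski open subset of X. -/
noncomputable section

abbrev Qbar : Type := AlgebraicClosure ℚ

/-- The absolute logarithmic Weil height of an algebraic number, via the
Mahler-measure formula applied to its (integer-scaled) minimal polynomial. -/
noncomputable def weilHeight (α : Qbar) : ℝ :=
  (Real.log (((minpoly ℚ α).support.lcm fun i => ((minpoly ℚ α).coeff i).den : ℕ) : ℝ) +
      (((minpoly ℚ α).aroots ℂ).map fun z => Real.log (max 1 ‖z‖)).sum) /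
    ((minpoly ℚ α).natDegree : ℝ)

/-- Points of the torus `G_m^n` over the algebraic numbers. -/
abbrev TorusPt (n : ℕ) : Type := Fin n → Qbarˣ

/-- Zariski-closed subsets of the torus: zero sets of families of polynomials. -/
def ZClosed {n : ℕ} (S : Set (TorusPt n)) : Prop :=
  ∃ I : Set (MvPolynomial (Fin n) Qbar),
    S = {x : TorusPt n | ∀ f ∈ I, MvPolynomial.eval (fun i => (x i : Qbar)) f = 0}

/-- Irreducibility (of a subset of the torus) for the Zariski topology. -/
def ZIrred {n : ℕ} (S : Set (TorusPt n)) : Prop :=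
  S.Nonempty ∧ ∀ Z₁ Z₂ : Set (TorusPt n), ZClosed Z₁ → ZClosed Z₂ →
    S ⊆ Z₁ ∪ Z₂ → S ⊆ Z₁ ∨ S ⊆ Z₂

/-- Dimension via lengths of chains of irreducible closed subsets. -/
def zdim {n : ℕ} (S : Set (TorusPt n)) : ℕ :=
  sSup {d : ℕ | ∃ Z : Fin (d + 1) → Set (TorusPt n),
    (∀ i, ZClosed (Z i) ∧ ZIrred (Z i) ∧ Z i ⊆ S) ∧
    ∀ i j : Fin (d + 1), i < j → Z i ⊂ Z j}

/-- An algebraic subgroup of the torus: a Zariski-closed subgroup. -/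
def IsAlgSubgroup {n : ℕ} (H : Set (TorusPt n)) : Prop :=
  ZClosed H ∧ (1 : TorusPt n) ∈ H ∧ (∀ x ∈ H, ∀ y ∈ H, x * y ∈ H) ∧ ∀ x ∈ H, x⁻¹ ∈ H

/-- A coset: a translate of an algebraic subgroup. -/
def IsCoset {n : ℕ} (C : Set (TorusPt n)) : Prop :=
  ∃ (g : TorusPt n) (H : Set (TorusPt n)), IsAlgSubgroup H ∧ C = (g * ·) '' H

/-- Zariski connectedness of a subset of the torus. -/
def ZConnected {n : ℕ} (H : Set (TorusPt n)) : Prop :=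
  ∀ Z₁ Z₂ : Set (TorusPt n), ZClosed Z₁ → ZClosed Z₂ → H ⊆ Z₁ ∪ Z₂ →
    H ∩ Z₁ ∩ Z₂ = ∅ → H ⊆ Z₁ ∨ H ⊆ Z₂

/-- `Y` is an `s`-anomalous subvariety of `X`. -/
def IsAnomalous {n : ℕ} (X Y : Set (TorusPt n)) (s : ℕ) : Prop :=
  Y ⊆ X ∧ ZClosed Y ∧ ZIrred Y ∧ 1 ≤ zdim Y ∧
    ∃ H : Set (TorusPt n), IsCoset H ∧ Y ⊆ H ∧
      (s : ℤ) + (zdim H : ℤ) - (n : ℤ) < (zdim Y : ℤ)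

/-- `X^{oa,s}` : the complement in `X` of the union of all `s`-anomalous subvarieties. -/
def openAnom {n : ℕ} (X : Set (TorusPt n)) (s : ℕ) : Set (TorusPt n) :=
  X \ ⋃ (Y : Set (TorusPt n)) (_ : IsAnomalous X Y s), Y

/-- `X` is defined over (the subfield) `K`: cut out by polynomials with coefficients in `K`. -/
def DefinedOver {n : ℕ} (K : IntermediateField ℚ Qbar) (X : Set (TorusPt n)) : Prop :=
  ∃ I : Set (MvPolynomial (Fin n) Qbar),
    (∀ f ∈ I, ∀ m, MvPolynomial.coeff m f ∈ K) ∧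
    X = {x : TorusPt n | ∀ f ∈ I, MvPolynomial.eval (fun i => (x i : Qbar)) f = 0}

def IsRootOfUnity (α : Qbar) : Prop := ∃ k : ℕ, 1 ≤ k ∧ α ^ k = 1

/-- The Bogomolov property for a subfield of the algebraic numbers. -/
def HasBogomolov (L : IntermediateField ℚ Qbar) : Prop :=
  ∃ C : ℝ, 0 < C ∧ ∀ α : Qbar, α ∈ L → α ≠ 0 → ¬ IsRootOfUnity α → C ≤ weilHeight α


section
open MvPolynomial TensorProduct

section

theorem dext_unique_gen {K F V : Type*} [Field K] [Field F] [Algebra K F] [CharZero F]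
    [AddCommGroup V] [Module K V] [Module F V] [IsScalarTower K F V]
    (D : Derivation K F V) (s : Set F) (hD : ∀ x ∈ s, D x = 0)
    (y : F) (hy : IsAlgebraic (IntermediateField.adjoin K s) y) : D y = 0 := by
  have hM : ∀ x ∈ IntermediateField.adjoin K s, D x = 0 := by
    intro x hx
    induction hx using IntermediateField.adjoin_induction with
    | mem x hx => exact hD x hx
    | algebraMap x => simp
    | add x y _ _ hx hy => simp [hx, hy]
    | inv x _ hx => simp [Derivation.leibniz_inv, hx]
    | mul x y _ _ hx hy => simp [hx, hy]
  have hpoly : ∀ P : Polynomial (IntermediateField.adjoin K s),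
      D (Polynomial.aeval y P) = Polynomial.aeval y (Polynomial.derivative P) • D y := by
    intro P
    induction P using Polynomial.induction_on with
    | C a => simpa using hM _ a.2
    | add p q hp hq => simp [add_smul, *]
    | monomial n a h =>
      skip
      simp [mul_smul, ← Nat.cast_smul_eq_nsmul F, hM _ a.2]
  have hi := hy.isIntegral
  have h1 : D (Polynomial.aeval y (minpoly (IntermediateField.adjoin K s) y)) = 0 := by simp
  rw [hpoly] at h1
  have hsep := (minpoly.irreducible hi).separable
  have := hsep.aeval_derivative_ne_zero (minpoly.aeval (IntermediateField.adjoin K s) y)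
  simpa [this] using h1

theorem dext_unique {K F : Type*} [Field K] [Field F] [Algebra K F] [CharZero F]
    (D : Derivation K F F) (s : Set F) (hD : ∀ x ∈ s, D x = 0)
    (y : F) (hy : IsAlgebraic (IntermediateField.adjoin K s) y) : D y = 0 :=
  dext_unique_gen D s hD y hy

theorem alg_transfer {R S A : Type*} [CommRing R] [CommRing S] [Field A] [Algebra R A]
    [Algebra S A] (hR : Function.Injective (algebraMap R A))
    (h : ∀ r : R, ∃ s : S, algebraMap S A s = algebraMap R A r) (x : A)
    (hx : IsAlgebraic R x) : IsAlgebraic S x := by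
  obtain ⟨p, hp, hpx⟩ := hx
  have : p.map (algebraMap R A) ∈ Polynomial.lifts (algebraMap S A) := by
    rw [Polynomial.lifts_iff_coeff_lifts]
    intro n
    obtain ⟨s, hs⟩ := h (p.coeff n)
    exact ⟨s, by simp [hs]⟩
  obtain ⟨q, hq⟩ := (Polynomial.mem_lifts _).1 this
  refine ⟨q, ?_, ?_⟩
  · rintro rfl
    rw [Polynomial.map_zero] at hq
    exact hp ((Polynomial.map_eq_zero_iff hR).1 hq.symm)
  · rw [Polynomial.aeval_def, ← Polynomial.eval_map, hq, Polynomial.eval_map, ← Polynomial.aeval_def, hpx]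

theorem dext_exists {K F ι : Type*} [Field K] [Field F] [Algebra K F] [CharZero F]
    (b : ι → F) (hb : IsTranscendenceBasis K b) (v : ι → F) :
    ∃ D : Derivation K F F, ∀ i, D (b i) = v i := by
  letI : Algebra (MvPolynomial ι K) F := (aeval b).toRingHom.toAlgebra
  haveI : IsScalarTower K (MvPolynomial ι K) F := IsScalarTower.of_algebraMap_eq (by
    intro x; change _ = aeval b (C x); simp)
  have hinj : Function.Injective (algebraMap (MvPolynomial ι K) F) := hb.1
  haveI : FaithfulSMul (MvPolynomial ι K) F := (faithfulSMul_iff_algebraMap_injective _ _).2 hinj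
  let Q := FractionRing (MvPolynomial ι K)
  letI : Algebra Q F := FractionRing.liftAlgebra _ _
  haveI : IsScalarTower (MvPolynomial ι K) Q F := FractionRing.isScalarTower_liftAlgebra _ _
  haveI : Algebra.IsAlgebraic (MvPolynomial ι K) F := by
    have h1 := hb.isAlgebraic
    rw [Algebra.adjoin_range_eq_range_aeval] at h1
    refine ⟨fun x => ?_⟩
    obtain ⟨p, hp, hpx⟩ := h1.isAlgebraic x
    let e := AlgEquiv.ofInjective (aeval b : MvPolynomial ι K →ₐ[K] F) hb.1
    refine ⟨p.map e.symm.toRingEquiv.toRingHom, ?_, ?_⟩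
    · rwa [Polynomial.map_ne_zero_iff e.symm.injective]
    · rw [Polynomial.aeval_def, Polynomial.eval₂_map]
      rw [Polynomial.aeval_def] at hpx
      have : (algebraMap (MvPolynomial ι K) F).comp e.symm.toRingEquiv.toRingHom = algebraMap _ F := by
        refine RingHom.ext fun y => ?_
        change aeval b (e.symm y) = y
        have := congrArg Subtype.val (e.apply_symm_apply y)
        exact this
      rw [this]; exact hpx
  haveI : Algebra.IsAlgebraic Q F := by
    exact (IsFractionRing.comap_isAlgebraic_iff (A := MvPolynomial ι K) (K := Q) (C := F)).1 inferInstance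
  haveI : CharZero K := ((algebraMap K F).charZero_iff (algebraMap K F).injective).2 inferInstance
  haveI : CharZero Q := ((algebraMap Q F).charZero_iff (algebraMap Q F).injective).2 inferInstance
  haveI : Algebra.FormallyEtale Q F := Algebra.FormallyEtale.of_isSeparable _ _
  haveI : Algebra.FormallyEtale (MvPolynomial ι K) Q := Algebra.FormallyEtale.of_isLocalization (nonZeroDivisors (MvPolynomial ι K))
  haveI : Algebra.FormallyEtale (MvPolynomial ι K) F := Algebra.FormallyEtale.comp _ Q _
  let e := (KaehlerDifferential.tensorKaehlerEquivOfFormallyEtale K (MvPolynomial ι K) F).symm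
  let d0 : Derivation K (MvPolynomial ι K) F := mkDerivation K v
  let l : F ⊗[MvPolynomial ι K] Ω[MvPolynomial ι K⁄K] →ₗ[F] F :=
    LinearMap.liftBaseChange F d0.liftKaehlerDifferential
  refine ⟨(l ∘ₗ e.toLinearMap).compDer (KaehlerDifferential.D K F), fun i => ?_⟩
  have : b i = algebraMap (MvPolynomial ι K) F (X i) := by
    change _ = aeval b (X i); simp
  rw [this]
  simp [e, l, KaehlerDifferential.tensorKaehlerEquivOfFormallyEtale_symm_D_algebraMap, d0]

end

section

theorem logd_mul {K F : Type*} [Field K] [Field F] [Algebra K F] (D : Derivation K F F)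
    {x y : F} (hx : x ≠ 0) (hy : y ≠ 0) : D (x * y) / (x * y) = D x / x + D y / y := by
  rw [Derivation.leibniz]; simp only [smul_eq_mul]; field_simp; ring

theorem logd_inv {K F : Type*} [Field K] [Field F] [Algebra K F] (D : Derivation K F F)
    {x : F} (hx : x ≠ 0) : D x⁻¹ / x⁻¹ = - (D x / x) := by
  rw [Derivation.leibniz_inv]; simp only [smul_eq_mul]; field_simp

theorem logd_prod {K F ι : Type*} [Field K] [Field F] [Algebra K F] (D : Derivation K F F)
    (s : Finset ι) (f : ι → F) (hf : ∀ i ∈ s, f i ≠ 0) :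
    D (∏ i ∈ s, f i) / (∏ i ∈ s, f i) = ∑ i ∈ s, D (f i) / f i := by
  classical
  induction s using Finset.induction_on with
  | empty => simp
  | insert a s ha ih =>
    rw [Finset.prod_insert ha, Finset.sum_insert ha, logd_mul, ih]
    · intro i hi; exact hf i (Finset.mem_insert_of_mem hi)
    · exact hf a (Finset.mem_insert_self _ _)
    · exact Finset.prod_ne_zero_iff.2 fun i hi => hf i (Finset.mem_insert_of_mem hi)

theorem logd_pow {K F : Type*} [Field K] [Field F] [Algebra K F] (D : Derivation K F F)
    {x : F} (hx : x ≠ 0) (k : ℕ) : D (x ^ k) / (x ^ k) = k * (D x / x) := by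
  induction k with
  | zero => simp
  | succ k ih => rw [pow_succ, logd_mul D (pow_ne_zero _ hx) hx, ih]; push_cast; ring

theorem logd_zpow {K F : Type*} [Field K] [Field F] [Algebra K F] (D : Derivation K F F)
    {x : F} (hx : x ≠ 0) (k : ℤ) : D (x ^ k) / (x ^ k) = k * (D x / x) := by
  obtain ⟨m, rfl | rfl⟩ := k.eq_nat_or_neg
  · simpa using logd_pow D hx m
  · rw [zpow_neg, zpow_natCast, logd_inv D (pow_ne_zero _ hx), logd_pow D hx]; push_cast; ring

/-- elements of the maximal ideal of the local ring at zero -/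
def SmallAt {K F : Type*} [Field K] [Field F] [Algebra K F] (t z : F) : Prop :=
  ∃ p q : Polynomial K, q.eval 0 ≠ 0 ∧ z * Polynomial.aeval t q = t * Polynomial.aeval t p

theorem SmallAt.add {K F : Type*} [Field K] [Field F] [Algebra K F] {t z w : F}
    (hz : SmallAt (K := K) t z) (hw : SmallAt (K := K) t w) : SmallAt (K := K) t (z + w) := by
  obtain ⟨p, q, h1, h2⟩ := hz
  obtain ⟨p', q', h1', h2'⟩ := hw
  refine ⟨p * q' + p' * q, q * q', by simp [h1, h1'], ?_⟩
  simp only [map_mul, map_add]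
  linear_combination (Polynomial.aeval t q') * h2 + (Polynomial.aeval t q) * h2'

theorem SmallAt.smul {K F : Type*} [Field K] [Field F] [Algebra K F] {t z : F} (c : K)
    (hz : SmallAt (K := K) t z) : SmallAt (K := K) t (algebraMap K F c * z) := by
  obtain ⟨p, q, h1, h2⟩ := hz
  refine ⟨Polynomial.C c * p, q, h1, ?_⟩
  simp only [map_mul, Polynomial.aeval_C]
  linear_combination (algebraMap K F c) * h2

theorem SmallAt.sum {K F ι : Type*} [Field K] [Field F] [Algebra K F] {t : F} (s : Finset ι)
    (z : ι → F) (hz : ∀ i ∈ s, SmallAt (K := K) t (z i)) : SmallAt (K := K) t (∑ i ∈ s, z i) := by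
  classical
  induction s using Finset.induction_on with
  | empty => exact ⟨0, 1, by simp, by simp⟩
  | insert a s ha ih =>
    rw [Finset.sum_insert ha]
    exact (hz a (Finset.mem_insert_self _ _)).add
      (ih fun i hi => hz i (Finset.mem_insert_of_mem hi))

theorem smallAt_const {K F : Type*} [Field K] [Field F] [Algebra K F] {t : F}
    (ht : Transcendental K t) (c : K) (hc : SmallAt (K := K) t (algebraMap K F c)) : c = 0 := by
  obtain ⟨p, q, h1, h2⟩ := hc
  have : Polynomial.C c * q - Polynomial.X * p = 0 := by
    refine (transcendental_iff.1 ht) _ ?_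
    simp [h2]
  have := congrArg (Polynomial.eval 0) this
  simpa [h1] using this

theorem smallAt_poly {K F : Type*} [Field K] [Field F] [Algebra K F] {t : F}
    (ht : Transcendental K t) (D : Derivation K F F) (hD : D t = 1) (u : Polynomial K)
    (hu : u ≠ 0) : ∃ k : ℤ, SmallAt (K := K) t
      (t * (D (Polynomial.aeval t u) / Polynomial.aeval t u) - k) := by
  obtain ⟨v, hv, hnd⟩ := Polynomial.exists_eq_pow_rootMultiplicity_mul_and_not_dvd u hu 0
  set k := u.rootMultiplicity 0
  refine ⟨k, Polynomial.derivative v, v, ?_, ?_⟩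
  · rwa [Polynomial.dvd_iff_isRoot] at hnd
  have ht0 : t ≠ 0 := by rintro rfl; exact ht (isAlgebraic_zero)
  have hv0 : v ≠ 0 := by rintro rfl; simp at hnd
  have hv1 : Polynomial.aeval t v ≠ 0 := fun h => hv0 (transcendental_iff.1 ht _ h)
  rw [hv]
  simp only [map_mul, map_pow, map_sub, Polynomial.aeval_X, map_zero, sub_zero]
  rw [logd_mul D (pow_ne_zero _ ht0) hv1, logd_pow D ht0, Derivation.map_aeval, hD]
  simp only [smul_eq_mul, mul_one]
  field_simp
  push_cast; ring

theorem smallAt_field {K F : Type*} [Field K] [Field F] [Algebra K F] {t : F}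
    (ht : Transcendental K t) (D : Derivation K F F) (hD : D t = 1) (x : F) (hx0 : x ≠ 0)
    (hx : x ∈ IntermediateField.adjoin K {t}) : ∃ k : ℤ, SmallAt (K := K) t
      (t * (D x / x) - k) := by
  obtain ⟨r, s, rfl⟩ := (IntermediateField.mem_adjoin_simple_iff _ _).1 hx
  rw [div_ne_zero_iff] at hx0
  obtain ⟨k, hk⟩ := smallAt_poly ht D hD r (by rintro rfl; simp at hx0)
  obtain ⟨l, hl⟩ := smallAt_poly ht D hD s (by rintro rfl; simp at hx0)
  refine ⟨k - l, ?_⟩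
  have := hk.add (hl.smul (-1))
  rw [div_eq_mul_inv (Polynomial.aeval t r), logd_mul D hx0.1 (inv_ne_zero hx0.2), logd_inv D hx0.2]
  convert this using 1
  push_cast; simp; ring

theorem residue1 {M A β : Type*} [Field M] [Field A] [Algebra M A] [CharZero A] [IsAlgClosed A]
    [Fintype β] (t : A) (ht : Transcendental M t)
    (halg : Algebra.IsAlgebraic (IntermediateField.adjoin M {t}) A)
    (D : Derivation M A A) (hD : D t = 1) (γ : β → M) (hγ : LinearIndependent ℤ γ)
    (y : β → A) (hy : ∀ b, y b ≠ 0) (b₀ : β) (hb₀ : y b₀ = t)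
    (h : ∑ b, algebraMap M A (γ b) * (D (y b) / y b) = 0) : False := by
  classical
  set E := IntermediateField.adjoin M {t} with hE
  let L := IntermediateField.adjoin E (Set.range y)
  haveI : FiniteDimensional E L := IntermediateField.finiteDimensional_adjoin (by
    intro x _; exact (halg.isAlgebraic x).isIntegral)
  haveI : CharZero E := ((algebraMap E A).charZero_iff (algebraMap E A).injective).2 inferInstance
  let Y : β → L := fun b => ⟨y b, IntermediateField.subset_adjoin _ _ ⟨b, rfl⟩⟩
  let N : β → E := fun b => Algebra.norm E (Y b)
  have hN : ∀ b, (N b : A) = ∏ σ : L →ₐ[E] A, σ (Y b) := fun b =>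
    Algebra.norm_eq_prod_embeddings E A (Y b)
  have hY0 : ∀ b, Y b ≠ 0 := fun b hb => hy b (congrArg Subtype.val hb)
  have hσ : ∀ σ : L →ₐ[E] A, ∑ b, algebraMap M A (γ b) * (D (σ (Y b)) / σ (Y b)) = 0 := by
    intro σ
    obtain ⟨τ, hτ⟩ := IsAlgClosed.surjective_restrictDomain_of_isAlgebraic (K := E) (L := L) (M := A) (E := A) σ
    have hτ' : ∀ x : L, τ x = σ x := fun x => by rw [← hτ]; rfl
    let e : A ≃ₐ[E] A := AlgEquiv.ofBijective τ (Algebra.IsAlgebraic.algHom_bijective τ)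
    have hτe : ∀ x, e x = τ x := fun _ => rfl
    have hMe : ∀ c : M, e (algebraMap M A c) = algebraMap M A c := fun c =>
      e.commutes (algebraMap M E c)
    have hMe' : ∀ c : M, e.symm (algebraMap M A c) = algebraMap M A c := fun c =>
      e.symm.commutes (algebraMap M E c)
    let D' : Derivation M A A := Derivation.mk'
      { toFun := fun x => e.symm (D (e x))
        map_add' := by intros; simp
        map_smul' := by
          intro c x
          simp [Algebra.smul_def, hMe, hMe'] }
      (by intro a b; simp)
    have hD' : ∀ x, D' x = e.symm (D (e x)) := fun _ => rfl
    have het : e t = t := e.commutes (⟨t, IntermediateField.subset_adjoin _ _ rfl⟩ : E)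
    have hcomm : ∀ x, D (e x) = e (D x) := by
      intro x
      have := dext_unique (D' - D) {t} (by
        rintro x rfl
        simp [hD', het, hD]) x (halg.isAlgebraic x)
      have h2 : D' x = D x := sub_eq_zero.1 this
      rw [← h2, hD', AlgEquiv.apply_symm_apply]
    have := congrArg e h
    rw [map_sum, map_zero] at this
    rw [← this]
    refine Finset.sum_congr rfl fun b _ => ?_
    rw [map_mul, map_div₀, hMe, ← hcomm, hτe, ← hτ']
  have hsum : ∑ b, algebraMap M A (γ b) * (D (N b : A) / (N b : A)) = 0 := by
    have : ∀ b, D (N b : A) / (N b : A) = ∑ σ : L →ₐ[E] A, D (σ (Y b)) / σ (Y b) := by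
      intro b
      rw [hN, logd_prod]
      intro σ _ h0
      exact hY0 b (by simpa using h0)
    simp only [this, Finset.mul_sum]
    rw [Finset.sum_comm]
    exact Finset.sum_eq_zero fun σ _ => hσ σ
  have hNne : ∀ b, (N b : A) ≠ 0 := by
    intro b
    rw [hN]
    exact Finset.prod_ne_zero_iff.2 fun σ _ h0 => hY0 b (by simpa using h0)
  have ht0 : t ≠ 0 := hb₀ ▸ hy b₀
  have hNb0 : (N b₀ : A) = t ^ Fintype.card (L →ₐ[E] A) := by
    rw [hN]
    have : ∀ σ : L →ₐ[E] A, σ (Y b₀) = t := by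
      intro σ
      have : Y b₀ = algebraMap E L ⟨t, IntermediateField.subset_adjoin _ _ rfl⟩ := by
        ext; exact hb₀
      rw [this, σ.commutes]; rfl
    simp [this]
  have hk : ∀ b, ∃ k : ℤ, SmallAt (K := M) t (t * (D (N b : A) / (N b : A)) - k) ∧
      (b = b₀ → k ≠ 0) := by
    intro b
    by_cases hb : b = b₀
    · refine ⟨Fintype.card (L →ₐ[E] A), ?_, fun _ => ?_⟩
      · rw [hb, hNb0, logd_pow D ht0, hD]
        have h0 : SmallAt (K := M) t 0 := ⟨0, 1, by simp, by simp⟩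
        have h1 : t * ((Fintype.card (L →ₐ[E] A) : A) * (1 / t)) -
          ((Fintype.card (L →ₐ[E] A) : ℤ) : A) = 0 := by
          field_simp; simp
        rwa [h1]
      · have : Nonempty (L →ₐ[E] A) := ⟨L.val⟩
        exact_mod_cast Fintype.card_ne_zero
    · obtain ⟨k, hk⟩ := smallAt_field ht D hD (N b) (hNne b) (N b).2
      exact ⟨k, hk, fun h => absurd h hb⟩
  choose k hk hk0 using hk
  have h1 := SmallAt.sum (K := M) Finset.univ _ (fun b _ => (hk b).smul (γ b))
  have h2 : ∑ b, algebraMap M A (γ b) * (t * (D (N b : A) / (N b : A)) - k b) =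
      algebraMap M A (- ∑ b, k b • γ b) := by
    have : ∑ b, algebraMap M A (γ b) * (t * (D (N b : A) / (N b : A)) - k b) =
       t * ∑ b, algebraMap M A (γ b) * (D (N b : A) / (N b : A)) - ∑ b, algebraMap M A (γ b) * k b := by
      rw [Finset.mul_sum, ← Finset.sum_sub_distrib]
      exact Finset.sum_congr rfl fun b _ => by ring
    rw [this, hsum]
    simp [mul_comm]
  rw [h2] at h1
  have h3 := smallAt_const ht _ h1
  exact hk0 b₀ rfl ((Fintype.linearIndependent_iff.1 hγ) k (neg_eq_zero.1 h3) b₀)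

end

section

theorem alg_two_step {K A ι : Type*} [Field K] [Field A] [Algebra K A] (x : ι → A) (i₀ : ι)
    (h : Algebra.IsAlgebraic (IntermediateField.adjoin K (Set.range x)) A) :
    Algebra.IsAlgebraic (IntermediateField.adjoin (IntermediateField.adjoin K (x '' {i₀}ᶜ)) {x i₀}) A := by
  refine ⟨fun z => ?_⟩
  refine alg_transfer (R := IntermediateField.adjoin K (Set.range x))
    Subtype.val_injective ?_ z (h.isAlgebraic z)
  have hmem : ∀ i, x i ∈ IntermediateField.adjoin (IntermediateField.adjoin K (x '' {i₀}ᶜ)) {x i₀} := by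
    intro i
    by_cases hi : i = i₀
    · rw [hi]; exact IntermediateField.mem_adjoin_simple_self _ _
    · have : x i ∈ IntermediateField.adjoin K (x '' {i₀}ᶜ) :=
        IntermediateField.subset_adjoin _ _ ⟨i, hi, rfl⟩
      exact (IntermediateField.adjoin (IntermediateField.adjoin K (x '' {i₀}ᶜ)) {x i₀}).algebraMap_mem
        (⟨_, this⟩ : IntermediateField.adjoin K (x '' {i₀}ᶜ))
  generalize IntermediateField.adjoin (IntermediateField.adjoin K (x '' {i₀}ᶜ)) {x i₀} = E at hmem ⊢
  have hle : IntermediateField.adjoin K (Set.range x) ≤ E.restrictScalars K := by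
    rw [IntermediateField.adjoin_le_iff]
    rintro _ ⟨i, rfl⟩
    exact hmem i
  intro r
  exact ⟨⟨r, hle r.2⟩, rfl⟩

theorem residue2_aux (A : Type*) {K L β : Type*} [Field K] [Field L] [Algebra K L] [CharZero L] [Fintype β]
    [Field A] [Algebra L A] [Algebra K A] [IsScalarTower K L A] [IsAlgClosed A] [Algebra.IsAlgebraic L A]
    (γ : β → K) (hγ : LinearIndependent ℤ γ) (y : β → L) (hy : ∀ b, y b ≠ 0)
    (h : ∀ δ : Derivation K L L, ∑ b, algebraMap K L (γ b) * (δ (y b) / y b) = 0) (b₀ : β)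
    (hb : Transcendental K (y b₀)) : False := by
  classical
  have ht : Transcendental K (y b₀) := hb
  set t := y b₀ with hty
  have hind : AlgebraicIndepOn K id {t} := by
    have := (algebraicIndependent_singleton_iff (R := K) (x := ((↑) : ({t} : Set L) → L)) ⟨t, rfl⟩).2 ht
    exact this
  obtain ⟨s, hs, hsb⟩ := exists_isTranscendenceBasis_superset hind
  have hts : t ∈ s := hs rfl
  haveI : CharZero A := charZero_of_injective_algebraMap (algebraMap L A).injective
  have hsA : IsTranscendenceBasis K (algebraMap L A ∘ ((↑) : s → L)) := hsb.algebraMap_comp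
  let v : s → L := fun i => if (i : L) = t then 1 else 0
  obtain ⟨DL, hDL⟩ := dext_exists _ hsb v
  obtain ⟨DA, hDA⟩ := dext_exists _ hsA (fun i => algebraMap L A (v i))
  have hagree : ∀ x : L, DA (algebraMap L A x) = algebraMap L A (DL x) := by
    intro x
    let D1 : Derivation K L A := DA.compAlgebraMap L
    let D2 : Derivation K L A := (Algebra.linearMap L A).compDer DL
    have hx := dext_unique_gen (D1 - D2) (Set.range ((↑) : s → L)) (by
      rintro _ ⟨i, rfl⟩
      have := hDA i
      simp only [Function.comp] at this
      simp [D1, D2, hDL, this]) x (hsb.isAlgebraic_field.isAlgebraic x)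
    have : D1 x = D2 x := sub_eq_zero.1 hx
    simpa [D1, D2] using this
  let i₀ : s := ⟨t, hts⟩
  let xA : s → A := algebraMap L A ∘ ((↑) : s → L)
  let M := IntermediateField.adjoin K (xA '' {i₀}ᶜ)
  have hDM : ∀ x : M, DA x = 0 := by
    intro x
    refine dext_unique DA (xA '' {i₀}ᶜ) ?_ x (isAlgebraic_algebraMap (A := A) x)
    rintro _ ⟨i, hi, rfl⟩
    have hit : (i : L) ≠ t := fun h => hi (Subtype.ext h)
    rw [hDA]
    simp [v, hit]
  let D : Derivation M A A := Derivation.mk'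
    { toFun := DA
      map_add' := by simp
      map_smul' := by
        intro c x
        rw [Algebra.smul_def, Derivation.leibniz]
        have : DA (algebraMap M A c) = 0 := hDM c
        rw [this, smul_zero, add_zero]; simp [Algebra.smul_def] }
    (by intro a b; simp)
  have hD : ∀ x, D x = DA x := fun _ => rfl
  have htM : Transcendental M (algebraMap L A t) := by
    have h1 : Transcendental (Algebra.adjoin K (xA '' {i₀}ᶜ)) (xA i₀) :=
      hsA.1.transcendental_adjoin (by simp)
    intro h2
    apply h1
    open IntermediateField.algebraAdjoinAdjoin in
    exact (IsFractionRing.isAlgebraic_iff (Algebra.adjoin K (xA '' {i₀}ᶜ)) M A).2 h2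
  have halg : Algebra.IsAlgebraic (IntermediateField.adjoin M {algebraMap L A t}) A := by
    exact alg_two_step xA i₀ hsA.isAlgebraic_field
  refine residue1 (M := M) (A := A) (algebraMap L A t) htM halg D ?_ (fun b => algebraMap K M (γ b))
    ?_ (fun b => algebraMap L A (y b)) ?_ b₀ rfl ?_
  · rw [hD, hagree, hDL i₀]; simp [v, i₀]
  · exact hγ.map' ((algebraMap K M).toAddMonoidHom.toIntLinearMap)
      (LinearMap.ker_eq_bot.2 (algebraMap K M).injective)
  · intro b; simpa using hy b
  · have := congrArg (algebraMap L A) (h DL)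
    rw [map_sum, map_zero] at this
    rw [← this]
    refine Finset.sum_congr rfl fun b _ => ?_
    rw [map_mul, map_div₀, hD, hagree, ← IsScalarTower.algebraMap_apply K M A,
      ← IsScalarTower.algebraMap_apply K L A]

theorem residue2 {K L β : Type*} [Field K] [Field L] [Algebra K L] [CharZero L] [Fintype β]
    (γ : β → K) (hγ : LinearIndependent ℤ γ) (y : β → L) (hy : ∀ b, y b ≠ 0)
    (h : ∀ δ : Derivation K L L, ∑ b, algebraMap K L (γ b) * (δ (y b) / y b) = 0) (b₀ : β) :
    IsAlgebraic K (y b₀) := by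
  by_contra hb
  exact residue2_aux (AlgebraicClosure L) γ hγ y hy h b₀ hb

end

section

/-- Laurent monomial -/
def tmon {ι L : Type*} [Fintype ι] [Field L] (ξ : ι → L) (m : ι → ℤ) : L := ∏ i, ξ i ^ m i

theorem logd_tmon {K L ι : Type*} [Fintype ι] [Field K] [Field L] [Algebra K L] (D : Derivation K L L)
    (ξ : ι → L) (hξ : ∀ i, ξ i ≠ 0) (m : ι → ℤ) :
    D (tmon ξ m) / tmon ξ m = ∑ i, (m i : L) * (D (ξ i) / ξ i) := by
  rw [tmon, logd_prod]
  · exact Finset.sum_congr rfl fun i _ => logd_zpow D (hξ i) _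
  · intro i _; exact zpow_ne_zero _ (hξ i)

theorem tmon_ne_zero {ι L : Type*} [Fintype ι] [Field L] (ξ : ι → L) (hξ : ∀ i, ξ i ≠ 0) (m : ι → ℤ) :
    tmon ξ m ≠ 0 := Finset.prod_ne_zero_iff.2 fun i _ => zpow_ne_zero _ (hξ i)

theorem residue3 {K L ι : Type*} [Field K] [Field L] [Algebra K L] [CharZero L] [Fintype ι]
    (hac : ∀ x : L, IsAlgebraic K x → x ∈ Set.range (algebraMap K L))
    (ξ : ι → L) (hξ : ∀ i, ξ i ≠ 0) (c : ι → K)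
    (h : ∀ δ : Derivation K L L, ∑ i, algebraMap K L (c i) * (δ (ξ i) / ξ i) = 0) :
    c ∈ Submodule.span K {v : ι → K | ∃ m : ι → ℤ, tmon ξ m ∈ Set.range (algebraMap K L) ∧
      v = fun i => (m i : K)} := by
  classical
  haveI : CharZero K := ((algebraMap K L).charZero_iff (algebraMap K L).injective).2 inferInstance
  let V := Submodule.span ℤ (Set.range c)
  haveI : Module.Finite ℤ V := Module.Finite.span_of_finite ℤ (Set.finite_range c)
  let B := Module.Free.chooseBasis ℤ V
  let γ : Module.Free.ChooseBasisIndex ℤ V → K := fun b => (B b : K)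
  have hγ : LinearIndependent ℤ γ := B.linearIndependent.map' V.subtype (by simp)
  let q : Module.Free.ChooseBasisIndex ℤ V → ι → ℤ := fun b i =>
    B.repr ⟨c i, Submodule.subset_span ⟨i, rfl⟩⟩ b
  have hc : ∀ i, c i = ∑ b, (q b i : K) * γ b := by
    intro i
    have := congrArg V.subtype (B.sum_repr ⟨c i, Submodule.subset_span ⟨i, rfl⟩⟩)
    rw [map_sum] at this
    refine this.symm.trans (Finset.sum_congr rfl fun b _ => ?_)
    rw [map_smul, zsmul_eq_mul]; rfl
  have halg := residue2 γ hγ (fun b => tmon ξ (q b)) (fun b => tmon_ne_zero ξ hξ _) (by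
    intro δ
    rw [← h δ]
    simp only [logd_tmon δ ξ hξ, hc, map_sum, Finset.mul_sum, Finset.sum_mul]
    rw [Finset.sum_comm]
    refine Finset.sum_congr rfl fun i _ => Finset.sum_congr rfl fun b _ => ?_
    simp; ring)
  have : c = ∑ b, γ b • (fun i => (q b i : K)) := by
    ext i
    rw [hc]; simp [mul_comm]
  rw [this]
  exact Submodule.sum_mem _ fun b _ => Submodule.smul_mem _ _
    (Submodule.subset_span ⟨q b, hac _ (halg b), rfl⟩)

end

section

/-- transcendence degree of a finite set of elements -/
def td (k : Type*) {L : Type*} [Field k] [Field L] [Algebra k L] (s : Set L) : ℕ :=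
  ((AlgebraicIndependent.matroid k L).eRk s).toNat

section
variable {k L : Type*} [Field k] [Field L] [Algebra k L]

theorem td_eRk {s : Set L} (hs : s.Finite) :
    (td k s : ℕ∞) = (AlgebraicIndependent.matroid k L).eRk s := by
  rw [td, ENat.coe_toNat]
  have h := (AlgebraicIndependent.matroid k L).eRk_le_encard s
  intro h2
  rw [h2, top_le_iff, Set.encard_eq_top_iff] at h
  exact h hs

theorem td_indep {s I : Set L} (hs : s.Finite) (hI : AlgebraicIndepOn k id I) (hIs : I ⊆ s) :
    I.ncard ≤ td k s := by
  have := (AlgebraicIndependent.matroid_indep_iff.2 hI).encard_le_eRk_of_subset hIs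
  rw [← td_eRk hs, ← (hs.subset hIs).cast_ncard_eq] at this
  exact_mod_cast this

theorem td_le_ncard {s : Set L} (hs : s.Finite) : td k s ≤ s.ncard := by
  have := (AlgebraicIndependent.matroid k L).eRk_le_encard s
  rw [← td_eRk hs, ← hs.cast_ncard_eq] at this
  exact_mod_cast this

theorem td_le_of_alg {s t : Set L} (hs : s.Finite) (ht : t.Finite)
    (h : ∀ a ∈ s, IsAlgebraic (Algebra.adjoin k t) a) : td k s ≤ td k t := by
  have h1 : s ⊆ (AlgebraicIndependent.matroid k L).closure t := by
    rw [AlgebraicIndependent.matroid_closure_eq]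
    exact h
  have := (AlgebraicIndependent.matroid k L).eRk_mono h1
  rw [Matroid.eRk_closure_eq, ← td_eRk hs, ← td_eRk ht] at this
  exact_mod_cast this

theorem td_mono {s t : Set L} (ht : t.Finite) (h : s ⊆ t) : td k s ≤ td k t := by
  have := (AlgebraicIndependent.matroid k L).eRk_mono h
  rw [← td_eRk (ht.subset h), ← td_eRk ht] at this
  exact_mod_cast this

theorem alg_adjoin_iff {t : Set L} {a : L} :
    IsAlgebraic (Algebra.adjoin k t) a ↔ IsAlgebraic (IntermediateField.adjoin k t) a := by
  open IntermediateField.algebraAdjoinAdjoin in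
  exact (IsFractionRing.isAlgebraic_iff (Algebra.adjoin k t) (IntermediateField.adjoin k t) L)

theorem alg_of_mem {t : Set L} {a : L} (h : a ∈ IntermediateField.adjoin k t) :
    IsAlgebraic (Algebra.adjoin k t) a :=
  alg_adjoin_iff.2 (isAlgebraic_algebraMap (⟨a, h⟩ : IntermediateField.adjoin k t))

theorem td_basis {s : Set L} (hs : s.Finite) : ∃ I ⊆ s, AlgebraicIndepOn k id I ∧
    (∀ a ∈ s, IsAlgebraic (Algebra.adjoin k I) a) ∧ I.ncard = td k s := by
  obtain ⟨I, hI⟩ := (AlgebraicIndependent.matroid k L).exists_isBasis s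
  have h := AlgebraicIndependent.matroid_isBasis_iff.1 hI
  refine ⟨I, h.2.1, h.1, h.2.2, ?_⟩
  have := hI.encard_eq_eRk
  rw [← td_eRk hs, ← (hs.subset h.2.1).cast_ncard_eq] at this
  exact_mod_cast this

/-- relative basis -/
theorem td_rel {s t : Set L} (hs : s.Finite) (ht : t.Finite) (hst : s ⊆ IntermediateField.adjoin k t) :
    ∃ J ⊆ t, J.ncard + td k s = td k t ∧
      ∀ a ∈ t, IsAlgebraic (IntermediateField.adjoin k (s ∪ J)) a := by
  obtain ⟨I, hI⟩ := (AlgebraicIndependent.matroid k L).exists_isBasis s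
  have h := AlgebraicIndependent.matroid_isBasis_iff.1 hI
  obtain ⟨B, hB, hIB⟩ := hI.indep.subset_isBasis_of_subset (X := s ∪ t) (hI.subset.trans Set.subset_union_left)
  have h' := AlgebraicIndependent.matroid_isBasis_iff.1 hB
  have hst_fin : (s ∪ t).Finite := hs.union ht
  have e1 : td k (s ∪ t) = td k t := by
    refine le_antisymm (td_le_of_alg hst_fin ht ?_) (td_mono hst_fin Set.subset_union_right)
    rintro a (ha | ha)
    · exact alg_of_mem (hst ha)
    · exact alg_of_mem (IntermediateField.subset_adjoin _ _ ha)
  have e2 : I.ncard = td k s := by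
    have := hI.encard_eq_eRk
    rw [← td_eRk hs, ← (hs.subset h.2.1).cast_ncard_eq] at this
    exact_mod_cast this
  have e3 : B.ncard = td k t := by
    have := hB.encard_eq_eRk
    rw [← td_eRk hst_fin, ← (hst_fin.subset h'.2.1).cast_ncard_eq, e1] at this
    exact_mod_cast this
  refine ⟨B \ I, ?_, ?_, ?_⟩
  · rintro x ⟨hxB, hxI⟩
    rcases h'.2.1 hxB with hx | hx
    · have : (AlgebraicIndependent.matroid k L).Indep (insert x I) :=
        hB.indep.subset (Set.insert_subset hxB hIB)
      exact absurd (hI.mem_of_insert_indep hx this) hxI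
    · exact hx
  · rw [← e2, ← e3]
    exact Set.ncard_sdiff_add_ncard_of_subset hIB (hst_fin.subset h'.2.1)
  · intro a ha
    have h1 := alg_adjoin_iff.1 (h'.2.2 a (Or.inr ha))
    have hle : IntermediateField.adjoin k B ≤ IntermediateField.adjoin k (s ∪ B \ I) := by
      refine IntermediateField.adjoin.mono _ _ _ ?_
      intro x hx
      by_cases hxI : x ∈ I
      · exact Or.inl (h.2.1 hxI)
      · exact Or.inr ⟨hx, hxI⟩
    exact alg_transfer Subtype.val_injective (fun r => ⟨⟨r, hle r.2⟩, rfl⟩) a h1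
end

theorem der_upgrade {k L : Type*} [Field k] [Field L] [Algebra k L] (K : IntermediateField k L)
    (D : Derivation k L L) (hD : ∀ x ∈ K, D x = 0) :
    ∃ D' : Derivation K L L, ∀ x, D' x = D x :=
  ⟨Derivation.mk'
    { toFun := D
      map_add' := by simp
      map_smul' := by
        intro c x
        rw [Algebra.smul_def, Derivation.leibniz]
        have : D (algebraMap K L c) = 0 := hD _ c.2
        rw [this, smul_zero, add_zero]; simp [Algebra.smul_def] }
    (by intro a b; simp), fun _ => rfl⟩

end

section

/-- logarithmic form attached to a vector of coefficients -/
def omegaForm {K L ι : Type*} [Fintype ι] [Field K] [Field L] [Algebra K L] (ξ : ι → L) :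
    (ι → L) →ₗ[L] (Derivation K L L →ₗ[L] L) where
  toFun c :=
    { toFun := fun δ => ∑ a, c a * (δ (ξ a) / ξ a)
      map_add' := by
        intro x y
        rw [← Finset.sum_add_distrib]
        exact Finset.sum_congr rfl fun a _ => by simp; ring
      map_smul' := by
        intro r x
        simp only [smul_eq_mul, Finset.mul_sum, RingHom.id_apply]
        exact Finset.sum_congr rfl fun a _ => by simp; ring }
  map_add' := by
    intro x y
    ext δ
    simp only [LinearMap.coe_mk, AddHom.coe_mk, LinearMap.add_apply]
    rw [← Finset.sum_add_distrib]
    exact Finset.sum_congr rfl fun a _ => by simp; ring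
  map_smul' := by
    intro r x
    ext δ
    simp only [LinearMap.coe_mk, AddHom.coe_mk, LinearMap.smul_apply, smul_eq_mul, Finset.mul_sum, RingHom.id_apply]
    exact Finset.sum_congr rfl fun a _ => by simp; ring

theorem omegaForm_apply {K L ι : Type*} [Fintype ι] [Field K] [Field L] [Algebra K L] (ξ : ι → L)
    (c : ι → L) (δ : Derivation K L L) : omegaForm ξ c δ = ∑ a, c a * (δ (ξ a) / ξ a) := rfl

/-- commutation of a derivation with closed forms -/
theorem omegaForm_lie {K L ι : Type*} [Fintype ι] [Field K] [Field L] [Algebra K L] (ξ : ι → L)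
    (hξ : ∀ i, ξ i ≠ 0)
    (c : ι → K) (D δ : Derivation K L L) (h0 : omegaForm ξ (fun a => algebraMap K L (c a)) D = 0) :
    D (omegaForm ξ (fun a => algebraMap K L (c a)) δ) =
      omegaForm ξ (fun a => algebraMap K L (c a)) ⁅D, δ⁆ := by
  have h1 := congrArg δ h0
  rw [omegaForm_apply, map_zero, map_sum] at h1
  rw [omegaForm_apply, omegaForm_apply, map_sum, ← sub_zero (∑ i, D _), ← h1,
    ← Finset.sum_sub_distrib]
  refine Finset.sum_congr rfl fun a _ => ?_
  have h2 := hξ a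
  rw [Derivation.commutator_apply, div_eq_mul_inv, div_eq_mul_inv, Derivation.leibniz,
    Derivation.leibniz, Derivation.leibniz, Derivation.leibniz]
  simp only [Derivation.map_algebraMap, Derivation.leibniz_inv, smul_eq_mul]
  field_simp
  ring

/-- K-rationality of linear relations -/
theorem rank_closed {K L ι P : Type*} [Fintype ι] [Finite P] [Field K] [Field L] [Algebra K L] (ξ : ι → L)
    (hξ : ∀ i, ξ i ≠ 0) (𝒟 : Set (Derivation K L L))
    (hconst : ∀ x : L, (∀ D ∈ 𝒟, D x = 0) → x ∈ Set.range (algebraMap K L))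
    (c : P → ι → K)
    (h0 : ∀ j, ∀ D ∈ 𝒟, omegaForm ξ (fun a => algebraMap K L (c j a)) D = 0) :
    Module.finrank K (Submodule.span K (Set.range fun j => omegaForm (K := K) ξ (fun a => algebraMap K L (c j a)))) ≤
    Module.finrank L (Submodule.span L (Set.range fun j => omegaForm (K := K) ξ (fun a => algebraMap K L (c j a)))) := by
  classical
  set w : P → (Derivation K L L →ₗ[L] L) := fun j => omegaForm (K := K) ξ (fun a => algebraMap K L (c j a)) with hw
  obtain ⟨κ, a, ha, hspan, hind⟩ := exists_linearIndependent' L w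
  haveI : Finite κ := Finite.of_injective a ha
  haveI := Fintype.ofFinite κ
  have hlie : ∀ j, ∀ D ∈ 𝒟, ∀ δ, D (w j δ) = w j ⁅D, δ⁆ := fun j D hD δ =>
    omegaForm_lie ξ hξ (c j) D δ (h0 j D hD)
  have hle : Submodule.span K (Set.range w) ≤ Submodule.span K (Set.range (w ∘ a)) := by
    rw [Submodule.span_le]
    rintro _ ⟨j, rfl⟩
    have hj : w j ∈ Submodule.span L (Set.range (w ∘ a)) := by
      rw [hspan]; exact Submodule.subset_span ⟨j, rfl⟩
    obtain ⟨A, hA⟩ := (Submodule.mem_span_range_iff_exists_fun L).1 hj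
    have hAK : ∀ i, ∀ D ∈ 𝒟, D (A i) = 0 := by
      intro i D hD
      have : ∑ i, D (A i) • (w ∘ a) i = 0 := by
        ext1 δ
        have e1 : ∀ δ, ∑ i, A i * w (a i) δ = w j δ := by
          intro δ
          have := congrArg (fun f => f δ) hA
          simpa using this
        have e2 := congrArg D (e1 δ)
        rw [hlie j D hD, ← e1, map_sum] at e2
        simp only [Derivation.leibniz, smul_eq_mul, hlie _ D hD, Finset.sum_add_distrib] at e2
        have e3 : ∑ x, w (a x) δ * D (A x) = 0 := by simpa using e2
        simp only [LinearMap.sum_apply, LinearMap.smul_apply, smul_eq_mul, Function.comp, LinearMap.zero_apply]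
        rw [← e3]
        exact Finset.sum_congr rfl fun _ _ => mul_comm _ _
      exact Fintype.linearIndependent_iff.1 hind _ this i
    choose A' hA' using fun i => hconst (A i) (hAK i)
    rw [SetLike.mem_coe, ← hA]
    refine Submodule.sum_mem _ fun i _ => ?_
    rw [← hA' i, algebraMap_smul]
    exact Submodule.smul_mem _ _ (Submodule.subset_span ⟨i, rfl⟩)
  haveI : Module.Finite K (Submodule.span K (Set.range (w ∘ a))) :=
    Module.Finite.span_of_finite K (Set.finite_range _)
  calc _ ≤ Module.finrank K (Submodule.span K (Set.range (w ∘ a))) := Submodule.finrank_mono hle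
    _ ≤ Fintype.card κ := finrank_range_le_card _
    _ = Module.finrank L (Submodule.span L (Set.range (w ∘ a))) := (finrank_span_eq_card hind).symm
    _ = _ := by rw [hspan]

end

section

/-- the first-order data used for the Ax type theorem -/
def AxData (k : Type*) {L : Type*} [Field k] [Field L] [Algebra k L] {n : ℕ} (ξ : Fin n → L)
    (E P : Finset (Fin n)) : Prop :=
  (∀ i, ξ i ≠ 0) ∧ ∃ D : Fin n → Derivation k L L,
    (∀ j ∈ E, ∀ i ∈ E, D j (ξ i) = if i = j then 1 else 0) ∧
    ∃ c : Fin n → Fin n → L, (∀ j ∈ P, ∀ l, ∀ a, D l (c j a) = 0) ∧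
      (Matrix.of fun (i j : P) => c j i).det ≠ 0 ∧
      ∀ l, ∀ j ∈ P, ∑ a, c j a * (D l (ξ a) / ξ a) = 0

/-- constants of a family of derivations -/
def constField {k L ι : Type*} [Field k] [Field L] [Algebra k L] (D : ι → Derivation k L L) :
    IntermediateField k L where
  carrier := {x | ∀ l, D l x = 0}
  mul_mem' := by intro a b ha hb l; simp [ha l, hb l]
  add_mem' := by intro a b ha hb l; simp [ha l, hb l]
  algebraMap_mem' := by intro r l; simp
  inv_mem' := by intro a ha l; simp [Derivation.leibniz_inv, ha l]

theorem mem_constField {k L ι : Type*} [Field k] [Field L] [Algebra k L] (D : ι → Derivation k L L)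
    (x : L) : x ∈ constField D ↔ ∀ l, D l x = 0 := Iff.rfl

theorem tmon_add {ι L : Type*} [Fintype ι] [Field L] (ξ : ι → L) (hξ : ∀ i, ξ i ≠ 0) (m m' : ι → ℤ) :
    tmon ξ (m + m') = tmon ξ m * tmon ξ m' := by
  simp only [tmon, ← Finset.prod_mul_distrib, Pi.add_apply]
  exact Finset.prod_congr rfl fun i _ => zpow_add₀ (hξ i) _ _

theorem tmon_smul {ι L : Type*} [Fintype ι] [Field L] (ξ : ι → L) (r : ℤ) (m : ι → ℤ) :
    tmon ξ (r • m) = tmon ξ m ^ r := by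
  simp only [tmon, Pi.smul_apply, smul_eq_mul, ← Finset.prod_zpow]
  exact Finset.prod_congr rfl fun i _ => by rw [mul_comm, zpow_mul]

/-- exponents mapping into a multiplicative set of nonzero elements -/
def expLattice {n : ℕ} {k L : Type*} [Field k] [Field L] [Algebra k L] (K : IntermediateField k L)
    (ξ : Fin n → L) (hξ : ∀ i, ξ i ≠ 0) : Submodule ℤ (Fin n → ℤ) where
  carrier := {m | tmon ξ m ∈ K}
  add_mem' := by
    intro a b ha hb
    change tmon ξ (a + b) ∈ K
    rw [tmon_add ξ hξ]; exact mul_mem ha hb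
  zero_mem' := by change tmon ξ 0 ∈ K; simp [tmon]
  smul_mem' := by
    intro r m hm
    change tmon ξ (r • m) ∈ K
    rw [tmon_smul]; exact zpow_mem hm r

theorem la_rank {L V W E : Type*} [Field L] [AddCommGroup V] [Module L V] [AddCommGroup W]
    [Module L W] [FiniteDimensional L V] [Fintype E] (ω : V →ₗ[L] W) (ev : W →ₗ[L] (E → L))
    (hs : ∀ f : E → L, ∃ v, ev (ω v) = f) (N : Submodule L W) (hN : N ≤ LinearMap.range ω)
    (hN' : N ≤ LinearMap.ker ev) :
    Fintype.card E + Module.finrank L N ≤ Module.finrank L (LinearMap.range ω) := by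
  let ev' := ev.domRestrict (LinearMap.range ω)
  have hsurj : Function.Surjective ev' := by
    intro f
    obtain ⟨v, hv⟩ := hs f
    exact ⟨⟨ω v, ⟨v, rfl⟩⟩, hv⟩
  have hrn := LinearMap.finrank_range_add_finrank_ker ev'
  rw [LinearMap.range_eq_top.2 hsurj, finrank_top, Module.finrank_fintype_fun_eq_card] at hrn
  rw [← hrn]
  refine Nat.add_le_add_left ?_ _
  have hNle : N ≤ (LinearMap.ker ev').map (LinearMap.range ω).subtype := by
    intro x hx
    exact ⟨⟨x, hN hx⟩, hN' hx, rfl⟩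
  calc _ ≤ Module.finrank L ((LinearMap.ker ev').map (LinearMap.range ω).subtype) :=
        Submodule.finrank_mono hNle
    _ ≤ _ := Submodule.finrank_map_le _ _

theorem la_span {L W J : Type*} [Field L] [AddCommGroup W] [Module L W] [Fintype J]
    (R : Submodule L W) (ev : J → W) (h : R ≤ Submodule.span L (Set.range ev)) :
    Module.finrank L R ≤ Fintype.card J := by
  haveI : Module.Finite L (Submodule.span L (Set.range ev)) :=
    Module.Finite.span_of_finite L (Set.finite_range _)
  exact (Submodule.finrank_mono h).trans (finrank_range_le_card _)

theorem ax_ineq {k L : Type*} [Field k] [Field L] [Algebra k L] [CharZero L] {n : ℕ} (ξ : Fin n → L)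
    (E P : Finset (Fin n)) (h : AxData k ξ E P) :
    ∃ (ρ : ℕ) (m : Fin ρ → Fin n → ℤ), LinearIndependent ℤ m ∧
      td k (Set.range fun j => tmon ξ (m j)) + E.card ≤ td k (Set.range ξ) ∧
      td k (Set.range fun j => tmon ξ (m j)) + E.card + P.card ≤ td k (Set.range ξ) + ρ := by
  classical
  obtain ⟨hξ, D, hD, c, hc, hdet, hcl⟩ := h
  let K := constField D
  have hac : ∀ x : L, IsAlgebraic K x → x ∈ Set.range (algebraMap K L) := by
    intro x hx
    have : x ∈ K := fun l => dext_unique (D l) (K : Set L) (fun y hy => hy l) x (by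
      refine alg_transfer Subtype.val_injective (fun r => ⟨⟨r, ?_⟩, rfl⟩) x hx
      exact IntermediateField.subset_adjoin _ _ r.2)
    exact ⟨⟨x, this⟩, rfl⟩
  choose D' hD' using fun l => der_upgrade K (D l) (fun x hx => hx l)
  let Λ := expLattice K ξ hξ
  let B := Module.finBasis ℤ Λ
  let ρ := Module.finrank ℤ Λ
  let m : Fin ρ → Fin n → ℤ := fun j => (B j : Fin n → ℤ)
  have hm : LinearIndependent ℤ m := B.linearIndependent.map' Λ.subtype (by simp)
  have hmK : ∀ j, tmon ξ (m j) ∈ K := fun j => (B j).2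
  refine ⟨ρ, m, hm, ?_⟩
  let ω := omegaForm (K := K) ξ
  let T := Module.finrank L (LinearMap.range ω)
  -- upper bound for T
  have hT : T + td k (Set.range fun j => tmon ξ (m j)) ≤ td k (Set.range ξ) := by
    obtain ⟨J, hJ, hJc, hJa⟩ := td_rel (k := k) (s := Set.range fun j => tmon ξ (m j)) (t := Set.range ξ)
      (Set.finite_range _) (Set.finite_range _) (by
        rintro _ ⟨j, rfl⟩
        exact prod_mem fun i _ => zpow_mem (IntermediateField.subset_adjoin k _ (Set.mem_range_self i)) _)
    have hJfin : J.Finite := (Set.finite_range _).subset hJ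
    rw [← hJc]
    refine Nat.add_le_add_right ?_ _
    haveI : Fintype J := hJfin.fintype
    let ev : J → (Derivation K L L →ₗ[L] L) := fun x =>
      { toFun := fun δ => δ x, map_add' := by simp, map_smul' := by simp }
    have hle : LinearMap.range ω ≤ Submodule.span L (Set.range ev) := by
      rintro _ ⟨v, rfl⟩
      refine mem_span_of_iInf_ker_le_ker ?_
      intro δ hδ
      rw [Submodule.mem_iInf] at hδ
      have hδJ : ∀ x ∈ J, δ x = 0 := fun x hx => hδ ⟨x, hx⟩
      have hδξ : ∀ a, δ (ξ a) = 0 := by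
        intro a
        refine dext_unique (δ.restrictScalars k) _ ?_ _ (hJa (ξ a) ⟨a, rfl⟩)
        rintro x (⟨j, rfl⟩ | hx)
        · exact δ.map_algebraMap (⟨_, hmK j⟩ : K)
        · exact hδJ x hx
      change ω v δ = 0
      simp [ω, omegaForm_apply, hδξ]
    calc T ≤ Fintype.card J := la_span _ _ hle
      _ = J.ncard := by rw [Set.ncard_eq_toFinset_card' J, Set.toFinset_card]
  -- lower bounds for T
  let cK : P → Fin n → K := fun j a => ⟨c j a, fun l => hc j j.2 l a⟩
  let N := Submodule.span L (Set.range fun j => ω (fun a => algebraMap K L (cK j a)))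
  have hker0 : ∀ j, ∀ l, ω (fun a => algebraMap K L (cK j a)) (D' l) = 0 := by
    intro j l
    have := hcl l j j.2
    simp only [ω, omegaForm_apply, hD']
    exact this
  have hT1 : E.card + Module.finrank L N ≤ T := by
    let ev : (Derivation K L L →ₗ[L] L) →ₗ[L] (E → L) :=
      { toFun := fun w j => w (D' j), map_add' := by intros; rfl, map_smul' := by intros; rfl }
    rw [← Fintype.card_coe E]
    refine la_rank ω ev ?_ N ?_ ?_
    · intro f
      refine ⟨(fun a => if h : a ∈ E then f ⟨a, h⟩ * ξ a else 0), ?_⟩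
      ext j
      change ω _ (D' j) = f j
      simp only [ω, omegaForm_apply, hD']
      rw [Finset.sum_eq_single (j : Fin n)]
      · have := hD j j.2 j j.2
        rw [this]
        have := hξ j
        simp
        field_simp
      · intro b _ hb
        by_cases hbE : b ∈ E
        · rw [hD j j.2 b hbE]; simp [hb]
        · simp [hbE]
      · simp
    · rw [Submodule.span_le]
      rintro _ ⟨j, rfl⟩
      exact ⟨_, rfl⟩
    · rw [Submodule.span_le]
      rintro _ ⟨j, rfl⟩
      change ev _ = 0
      ext l
      exact hker0 j l
  have hcKind : LinearIndependent K cK := by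
    rw [Fintype.linearIndependent_iff]
    intro g hg
    have : (Matrix.of fun (i j : P) => c j i).mulVec (fun j => (g j : L)) = 0 := by
      ext i
      have := congrArg (fun v => algebraMap K L (v i)) hg
      simp only [Finset.sum_apply, Pi.smul_apply, smul_eq_mul, map_sum, map_mul, Pi.zero_apply, map_zero] at this
      simp only [Matrix.mulVec, dotProduct, Matrix.of_apply, Pi.zero_apply]
      rw [← this]
      exact Finset.sum_congr rfl fun j _ => mul_comm _ _
    have h2 := Matrix.eq_zero_of_mulVec_eq_zero hdet this
    intro j
    exact Subtype.ext (congrFun h2 j)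
  have hN : P.card ≤ Module.finrank L N + ρ := by
    have h1 := rank_closed ξ hξ (Set.range D') (by
      intro x hx
      exact ⟨⟨x, fun l => by rw [← hD']; exact hx _ ⟨l, rfl⟩⟩, rfl⟩) cK (by
      rintro j _ ⟨l, rfl⟩
      exact hker0 j l)
    refine le_trans ?_ (Nat.add_le_add_right h1 _)
    let Ω : (P → K) →ₗ[K] (Derivation K L L →ₗ[L] L) :=
      Fintype.linearCombination K (fun j => ω (fun a => algebraMap K L (cK j a)))
    let Cm : (P → K) →ₗ[K] (Fin n → K) := Fintype.linearCombination K cK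
    have hCm : Function.Injective Cm := by
      rw [← LinearMap.ker_eq_bot, LinearMap.ker_eq_bot']
      intro g hg
      ext1 j
      exact Fintype.linearIndependent_iff.1 hcKind g hg j
    have hrn := LinearMap.finrank_range_add_finrank_ker Ω
    rw [Module.finrank_fintype_fun_eq_card, Fintype.card_coe] at hrn
    rw [← hrn, Fintype.range_linearCombination]
    refine Nat.add_le_add_left ?_ _
    have hmap : (LinearMap.ker Ω).map Cm ≤ Submodule.span K (Set.range fun j => fun i => ((m j i : ℤ) : K)) := by
      rintro _ ⟨g, hg, rfl⟩
      have hg' : ω (fun a => algebraMap K L (Cm g a)) = 0 := by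
        have h3 : Ω g = 0 := hg
        rw [← h3]
        simp only [Ω, Cm, Fintype.linearCombination_apply]
        have : (fun a => algebraMap K L ((∑ j, g j • cK j) a)) =
          ∑ j, (algebraMap K L (g j)) • (fun a => algebraMap K L (cK j a)) := by
          ext a; simp
        rw [this, map_sum]
        refine Finset.sum_congr rfl fun j _ => ?_
        rw [map_smul, algebraMap_smul]
      have h4 := residue3 hac ξ hξ (Cm g) (fun δ => congrArg (fun f => f δ) hg')
      refine Submodule.span_le.2 ?_ h4
      rintro _ ⟨q, ⟨y, hy⟩, rfl⟩
      have hq : q ∈ Λ := by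
        change tmon ξ q ∈ K
        rw [← hy]; exact y.2
      have h5 := congrArg Λ.subtype (B.sum_repr ⟨q, hq⟩)
      rw [map_sum] at h5
      have : (fun i => ((q i : ℤ) : K)) = ∑ j, ((B.repr ⟨q, hq⟩ j : ℤ) : K) • (fun i => ((m j i : ℤ) : K)) := by
        ext1 i
        have := congrFun h5 i
        simp only [Finset.sum_apply, map_smul, Pi.smul_apply, Submodule.subtype_apply] at this
        rw [← this]
        simp [m]
      rw [SetLike.mem_coe, this]
      exact Submodule.sum_mem _ fun j _ => Submodule.smul_mem _ _ (Submodule.subset_span ⟨j, rfl⟩)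
    calc Module.finrank K (LinearMap.ker Ω) = Module.finrank K ((LinearMap.ker Ω).map Cm) :=
          (LinearEquiv.finrank_eq (Submodule.equivMapOfInjective Cm hCm _))
      _ ≤ _ := Submodule.finrank_mono hmap
      _ ≤ Fintype.card (Fin ρ) := finrank_range_le_card _
      _ = ρ := Fintype.card_fin _
  constructor <;> omega

end

section

/-- nonconstant polynomial in the Ith variable: other variables independent mod it -/
theorem indep_mod_poly {k : Type*} [Field k] {d : ℕ} (π : MvPolynomial (Fin (d+1)) k) (hπ : π ≠ 0)
    (i : Fin (d+1)) (hi : 0 < degreeOf i π) (f : MvPolynomial (Fin d) k)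
    (hf : π ∣ rename i.succAbove f) : f = 0 := by
  by_contra h0
  obtain ⟨g, hg⟩ := hf
  have hr : rename i.succAbove f ≠ 0 := by
    intro h
    exact h0 (rename_injective _ (Fin.succAbove_right_injective) (by simpa using h))
  have hg0 : g ≠ 0 := by
    rintro rfl
    simp at hg; exact hr (by simpa using hg)
  have h1 : degreeOf i (rename i.succAbove f) = 0 := by
    by_contra h2
    have : i ∈ (rename i.succAbove f).vars := by
      classical rw [degreeOf_def] at h2
      rw [vars_def]
      simpa using Multiset.count_ne_zero.1 h2
    have := vars_rename i.succAbove f this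
    simp at this
  rw [hg, degreeOf_mul_eq hπ hg0] at h1
  omega

theorem H0 {k B : Type*} [Field k] [CommRing B] [IsDomain B] [Algebra k B] [Algebra.FiniteType k B]
    (f : B) (hf : f ≠ 0) (Q : Ideal B) (hQ : Q ∈ (Ideal.span {f}).minimalPrimes) :
    ∃ d, ∃ x : Fin d → B, (∀ b : B, ∃ p : Polynomial (MvPolynomial (Fin d) k), p.Monic ∧
        p.eval₂ (aeval (R := k) x).toRingHom b = 0) ∧
      ∃ y : Fin (d-1) → B ⧸ Q, AlgebraicIndependent k y := by
  haveI : IsNoetherianRing B := Algebra.FiniteType.isNoetherianRing k B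
  haveI := hQ.1.1
  have hfQ : f ∈ Q := hQ.1.2 (Ideal.mem_span_singleton_self f)
  have hh : Q.height ≤ 1 := Ideal.height_le_one_of_isPrincipal_of_mem_minimalPrimes _ Q hQ
  obtain ⟨d, g, hg, hgi⟩ := exists_integral_inj_algHom_of_fg k B
  letI : Algebra (MvPolynomial (Fin d) k) B := g.toRingHom.toAlgebra
  haveI : IsScalarTower k (MvPolynomial (Fin d) k) B := IsScalarTower.of_algebraMap_eq (by
    intro x; exact (g.commutes x).symm)
  haveI : Algebra.IsIntegral (MvPolynomial (Fin d) k) B := ⟨hgi⟩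
  haveI : FaithfulSMul (MvPolynomial (Fin d) k) B := (faithfulSMul_iff_algebraMap_injective _ _).2 hg
  refine ⟨d, fun i => g (X i), ?_, ?_⟩
  · intro b
    obtain ⟨p, hp, hpb⟩ := hgi b
    refine ⟨p, hp, ?_⟩
    have : aeval (fun i => g (X i)) = g := by ext; simp
    rw [this]; exact hpb
  · have hu : (Q.under (MvPolynomial (Fin d) k)).height ≤ 1 := by
      have := Ideal.height_eq_height_add_of_liesOver_of_hasGoingDown (Q.under (MvPolynomial (Fin d) k)) Q
      rw [this] at hh
      exact le_trans le_self_add hh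
    have hne : Q.under (MvPolynomial (Fin d) k) ≠ ⊥ := by
      intro h
      have := Ideal.eq_bot_of_comap_eq_bot (R := MvPolynomial (Fin d) k) h
      rw [this] at hfQ
      exact hf hfQ
    obtain ⟨π, hπm, hπ⟩ := Ideal.IsPrime.exists_mem_prime_of_ne_bot (I := Q.under (MvPolynomial (Fin d) k)) inferInstance hne
    have hspan : Q.under (MvPolynomial (Fin d) k) = Ideal.span {π} := by
      by_contra h
      haveI hp1 : (Ideal.span {π}).IsPrime := (Ideal.span_singleton_prime hπ.ne_zero).2 hπ
      have hle : Ideal.span {π} < Q.under (MvPolynomial (Fin d) k) :=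
        lt_of_le_of_ne ((Ideal.span_singleton_le_iff_mem _).2 hπm) (Ne.symm h)
      have h2 := Ideal.height_add_one_le_of_lt_of_isPrime hle
      have hlt : (⊥ : Ideal (MvPolynomial (Fin d) k)) < Ideal.span {π} := by
        rw [bot_lt_iff_ne_bot]; simpa using hπ.ne_zero
      have h3 := Ideal.height_add_one_le_of_lt_of_isPrime hlt
      have h4 : (1 : ℕ∞) + 1 ≤ 1 := by
        refine le_trans ?_ (h2.trans hu)
        gcongr
        exact le_trans (by simp) h3
      exact absurd h4 (by decide)
    obtain ⟨i, hi⟩ : ∃ i, 0 < degreeOf i π := by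
      by_contra! h
      have : π = C (coeff 0 π) := by
        rw [← totalDegree_eq_zero_iff_eq_C]
        rw [totalDegree_eq_zero_iff]
        intro m hm i
        have := monomial_le_degreeOf i hm
        have := h i
        omega
      have hc : coeff 0 π ≠ 0 := by
        intro h0; rw [h0] at this; exact hπ.ne_zero (by simpa using this)
      apply hπ.not_unit
      rw [this]
      exact (IsUnit.mk0 _ hc).map C
    obtain _ | d := d
    · exact i.elim0
    change ∃ y : Fin d → B ⧸ Q, AlgebraicIndependent k y
    refine ⟨fun j => Ideal.Quotient.mk Q (g (X (i.succAbove j))), ?_⟩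
    rw [algebraicIndependent_iff]
    intro F hF
    apply indep_mod_poly π hπ.ne_zero i hi
    rw [← Ideal.mem_span_singleton, ← hspan]
    change g (rename i.succAbove F) ∈ Q
    rw [← Ideal.Quotient.eq_zero_iff_mem, ← hF]
    have : ((Ideal.Quotient.mkₐ k Q).comp (g.comp (rename i.succAbove)))
        = aeval (fun j => Ideal.Quotient.mk Q (g (X (i.succAbove j)))) := by
      ext; simp
    exact DFunLike.congr_fun this F

end

section

section
variable {k L : Type*} [Field k] [Field L] [Algebra k L]

theorem td_F1 {κ ι : Type*} [Fintype κ] [Finite ι] (y : κ → L) (hy : AlgebraicIndependent k y)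
    (η : ι → L) (h : ∀ i, IsAlgebraic (Algebra.adjoin k (Set.range η)) (y i)) :
    Fintype.card κ ≤ td k (Set.range η) := by
  have h1 : td k (Set.range y) ≤ td k (Set.range η) :=
    td_le_of_alg (Set.finite_range y) (Set.finite_range η) (by rintro _ ⟨i, rfl⟩; exact h i)
  have h2 : (Set.range y).ncard ≤ td k (Set.range y) :=
    td_indep (Set.finite_range y) hy.coe_range subset_rfl
  have h3 : (Set.range y).ncard = Fintype.card κ := by
    rw [← Set.image_univ, Set.ncard_image_of_injective _ hy.injective, Set.ncard_univ, Nat.card_eq_fintype_card]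
  omega

theorem td_F2 {n : ℕ} (η : Fin n → L) : ∃ E : Finset (Fin n),
    AlgebraicIndependent k (fun i : E => η i) ∧ E.card = td k (Set.range η) ∧
    ∀ a, IsAlgebraic (Algebra.adjoin k (η '' E)) (η a) := by
  obtain ⟨I, hI, hind, halg, hc⟩ := td_basis (k := k) (Set.finite_range η)
  have : Set.SurjOn η Set.univ I := by
    intro x hx
    obtain ⟨i, rfl⟩ := hI hx
    exact ⟨i, trivial, rfl⟩
  obtain ⟨s, -, hs⟩ := this.exists_bijOn_subset
  classical
  refine ⟨s.toFinset, ?_, ?_, ?_⟩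
  · have e : (s.toFinset : Set (Fin n)) = s := by simp
    let e : s.toFinset ≃ I := (Equiv.subtypeEquivRight (by simp)).trans (hs.equiv η)
    exact (algebraicIndependent_equiv' e (f := fun x : I => (x : L)) rfl).2 hind
  · rw [← hc, ← hs.image_eq, Set.ncard_image_of_injOn hs.injOn, Set.ncard_eq_toFinset_card']
  · intro a
    have : η '' (s.toFinset : Set (Fin n)) = I := by simp [hs.image_eq]
    rw [this]
    exact halg _ ⟨a, rfl⟩

theorem alg_of_mem_adjoin {t : Set L} {a : L} (h : a ∈ Algebra.adjoin k t) :
    IsAlgebraic (Algebra.adjoin k t) a :=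
  isAlgebraic_algebraMap (⟨a, h⟩ : Algebra.adjoin k t)

theorem aeval_mem_adjoin {ι : Type*} (η : ι → L) (f : MvPolynomial ι k) :
    aeval η f ∈ Algebra.adjoin k (Set.range η) := by
  rw [Algebra.adjoin_range_eq_range_aeval]; exact ⟨f, rfl⟩

theorem alg_of_poly {ι : Type*} (y : ι → L) (b : L) (p : Polynomial (MvPolynomial ι k))
    (hp : p.Monic) (h : p.eval₂ (aeval (R := k) y).toRingHom b = 0) :
    IsAlgebraic (Algebra.adjoin k (Set.range y)) b := by
  let g : MvPolynomial ι k →+* Algebra.adjoin k (Set.range y) :=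
      (aeval (R := k) y).toRingHom.codRestrict _ (aeval_mem_adjoin y)
  refine ⟨p.map g, (hp.map g).ne_zero, ?_⟩
  rw [Polynomial.aeval_def, Polynomial.eval₂_map]
  exact h

theorem option_eval {ι : Type*} (y : ι → L) (z : L) (F : MvPolynomial (Option ι) k) :
    (optionEquivLeft k ι F).eval₂ (aeval (R := k) y).toRingHom z =
      aeval (fun o : Option ι => o.elim z y) F := by
  rw [optionEquivLeft_apply]
  induction F using MvPolynomial.induction_on with
  | C a => simp
  | add p q hp hq => rw [map_add, Polynomial.eval₂_add, hp, hq, map_add]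
  | mul_X p i hp =>
    rw [map_mul, Polynomial.eval₂_mul, hp, map_mul]
    congr 1
    rcases i with _ | i <;> simp

theorem ren_ev {n : ℕ} {E : Finset (Fin n)} (ζ : Fin n → L) (f : MvPolynomial (Fin n) k)
    (P : Polynomial (MvPolynomial E k)) :
    aeval ζ (P.eval₂ (rename (R := k) (Subtype.val : E → Fin n)).toRingHom f)
    = P.eval₂ (aeval (R := k) (fun i : E => ζ i)).toRingHom (aeval ζ f) := by
  rw [← AlgHom.coe_toRingHom, Polynomial.hom_eval₂]
  congr 1
  ext <;> simp

variable {L' : Type*} [Field L'] [Algebra k L']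

theorem indep_transfer {n : ℕ} (η : Fin n → L) (η' : Fin n → L')
    (h : ∀ f : MvPolynomial (Fin n) k, aeval η f = 0 → aeval η' f = 0) (E : Finset (Fin n))
    (hE : AlgebraicIndependent k (fun i : E => η' i)) : AlgebraicIndependent k (fun i : E => η i) := by
  rw [algebraicIndependent_iff] at hE ⊢
  intro f hf
  apply hE
  have := h (rename Subtype.val f) (by rw [aeval_rename]; exact hf)
  rw [aeval_rename] at this; exact this

theorem td_Mono {n : ℕ} (η : Fin n → L) (η' : Fin n → L')
    (h : ∀ f : MvPolynomial (Fin n) k, aeval η f = 0 → aeval η' f = 0) :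
    td k (Set.range η') ≤ td k (Set.range η) := by
  obtain ⟨E, hE, hc, -⟩ := td_F2 (k := k) η'
  rw [← hc, ← Fintype.card_coe]
  exact td_F1 _ (indep_transfer η η' h E hE) _
    (fun i => alg_of_mem_adjoin (Algebra.subset_adjoin ⟨i, rfl⟩))

theorem td_Drop {n : ℕ} (η : Fin n → L) (η' : Fin n → L')
    (h : ∀ f : MvPolynomial (Fin n) k, aeval η f = 0 → aeval η' f = 0)
    (f : MvPolynomial (Fin n) k) (hf' : aeval η' f = 0) (hf : aeval η f ≠ 0) :
    td k (Set.range η') < td k (Set.range η) := by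
  obtain ⟨E, hE, hc, -⟩ := td_F2 (k := k) η'
  have hE1 := indep_transfer η η' h E hE
  by_contra hlt
  have hno : ¬ AlgebraicIndependent k (fun o : Option E => o.elim (aeval η f) (fun i : E => η i)) := by
    intro hi
    have := td_F1 _ hi η (by
      rintro (_ | i)
      · exact alg_of_mem_adjoin (aeval_mem_adjoin η f)
      · exact alg_of_mem_adjoin (Algebra.subset_adjoin ⟨i, rfl⟩))
    simp at this
    omega
  rw [algebraicIndependent_iff] at hno
  push Not at hno
  obtain ⟨F, hF, hF0⟩ := hno
  let P := optionEquivLeft k E F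
  have hP0 : P ≠ 0 := by simpa [P] using hF0
  have hP : P.eval₂ (aeval (R := k) (fun i : E => η i)).toRingHom (aeval η f) = 0 := by
    rw [← hF]
    exact option_eval _ _ F
  obtain ⟨P', hPe, hd⟩ := Polynomial.exists_eq_pow_rootMultiplicity_mul_and_not_dvd P hP0 0
  rw [Polynomial.C_0, sub_zero, Polynomial.X_dvd_iff] at hd
  rw [Polynomial.C_0, sub_zero] at hPe
  rw [hPe, Polynomial.eval₂_mul, Polynomial.eval₂_X_pow] at hP
  have hP' := (mul_eq_zero.1 hP).resolve_left (pow_ne_zero _ hf)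
  apply hd
  rw [algebraicIndependent_iff] at hE
  apply hE
  have h2 := h _ ((ren_ev η f P').trans hP')
  rw [ren_ev, hf', Polynomial.eval₂_at_zero] at h2
  exact h2
end

section
variable {k : Type*} [Field k] {n : ℕ}

/-- generic point -/
def gp (q : Ideal (MvPolynomial (Fin n) k)) [q.IsPrime] (i : Fin n) :
    FractionRing (MvPolynomial (Fin n) k ⧸ q) :=
  algebraMap _ _ (Ideal.Quotient.mk q (X i))

theorem aeval_gp (q : Ideal (MvPolynomial (Fin n) k)) [q.IsPrime] (f : MvPolynomial (Fin n) k) :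
    aeval (gp q) f = algebraMap _ (FractionRing (MvPolynomial (Fin n) k ⧸ q)) (Ideal.Quotient.mk q f) := by
  induction f using MvPolynomial.induction_on with
  | C a =>
    rw [aeval_C]
    rw [IsScalarTower.algebraMap_apply k (MvPolynomial (Fin n) k ⧸ q) (FractionRing (MvPolynomial (Fin n) k ⧸ q))]
    rfl
  | add p q hp hq => simp_all
  | mul_X p i hp => simp_all [gp]

theorem aeval_gp_eq_zero {q : Ideal (MvPolynomial (Fin n) k)} [q.IsPrime] {f : MvPolynomial (Fin n) k} :
    aeval (gp q) f = 0 ↔ f ∈ q := by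
  rw [aeval_gp, FaithfulSMul.algebraMap_eq_zero_iff, Ideal.Quotient.eq_zero_iff_mem]

/-- dimension of a prime -/
def dq (q : Ideal (MvPolynomial (Fin n) k)) [q.IsPrime] : ℕ := td k (Set.range (gp q))

theorem dq_eq {L : Type*} [Field L] [Algebra k L] (q : Ideal (MvPolynomial (Fin n) k)) [q.IsPrime]
    (ξ : Fin n → L) (h : ∀ f : MvPolynomial (Fin n) k, aeval ξ f = 0 ↔ f ∈ q) :
    dq q = td k (Set.range ξ) :=
  le_antisymm (td_Mono _ _ fun f hf => aeval_gp_eq_zero.2 ((h f).1 hf))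
    (td_Mono _ _ fun f hf => (h f).2 (aeval_gp_eq_zero.1 hf))

theorem dq_le (q : Ideal (MvPolynomial (Fin n) k)) [q.IsPrime] : dq q ≤ n := by
  refine (td_le_ncard (Set.finite_range _)).trans ?_
  rw [← Set.image_univ]
  refine (Set.ncard_image_le).trans ?_
  simp

theorem dq_lt {q q' : Ideal (MvPolynomial (Fin n) k)} [q.IsPrime] [q'.IsPrime] (h : q < q') :
    dq q' < dq q := by
  obtain ⟨f, hf, hf'⟩ := SetLike.exists_of_lt h
  exact td_Drop _ _ (fun f hf => aeval_gp_eq_zero.2 (h.le (aeval_gp_eq_zero.1 hf))) f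
    (aeval_gp_eq_zero.2 hf) (fun h => hf' (aeval_gp_eq_zero.1 h))

theorem dq_H (q M : Ideal (MvPolynomial (Fin n) k)) [q.IsPrime] [M.IsPrime]
    (hqM : q ≤ M) (f : MvPolynomial (Fin n) k) (hf : f ∉ q) (hfM : f ∈ M) :
    ∃ (q' : Ideal (MvPolynomial (Fin n) k)) (_ : q'.IsPrime), q ≤ q' ∧ f ∈ q' ∧ q' ≤ M ∧
      dq q ≤ dq q' + 1 := by
  let π := Ideal.Quotient.mk q
  have hπ : Function.Surjective π := Ideal.Quotient.mk_surjective
  have hker : RingHom.ker π = q := Ideal.mk_ker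
  haveI : (M.map π).IsPrime := Ideal.map_isPrime_of_surjective hπ (by rwa [hker])
  have hMc : (M.map π).comap π = M := by
    rw [Ideal.comap_map_of_surjective' π hπ, hker, sup_eq_left.2 hqM]
  have hle : Ideal.span {π f} ≤ M.map π := by
    rw [Ideal.span_singleton_le_iff_mem]; exact Ideal.mem_map_of_mem π hfM
  obtain ⟨Q, hQ, hQM⟩ := Ideal.exists_minimalPrimes_le hle
  haveI := hQ.1.1
  have hf0 : π f ≠ 0 := fun h => hf (Ideal.Quotient.eq_zero_iff_mem.1 h)
  obtain ⟨d, x, hx, y, hy⟩ := H0 (k := k) (π f) hf0 Q hQ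
  refine ⟨Q.comap π, inferInstance, ?_, ?_, ?_, ?_⟩
  · intro a ha
    change π a ∈ Q
    rw [show π a = 0 from Ideal.Quotient.eq_zero_iff_mem.2 ha]; exact Q.zero_mem
  · exact hQ.1.2 (Ideal.mem_span_singleton_self _)
  · rw [← hMc]; exact Ideal.comap_mono hQM
  · have h1 : dq q ≤ d := by
      let ψ : (MvPolynomial (Fin n) k ⧸ q) →ₐ[k] FractionRing (MvPolynomial (Fin n) k ⧸ q) :=
        IsScalarTower.toAlgHom _ _ _
      have h2 : td k (Set.range (gp q)) ≤ td k (Set.range (fun i => ψ (x i))) := by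
        refine td_le_of_alg (Set.finite_range _) (Set.finite_range _) ?_
        rintro _ ⟨i, rfl⟩
        obtain ⟨p, hp, hpb⟩ := hx (π (X i))
        refine alg_of_poly _ _ p hp ?_
        have h3 := congrArg ψ hpb
        rw [← AlgHom.coe_toRingHom, Polynomial.hom_eval₂, map_zero] at h3
        rw [← h3]
        congr 1
        ext <;> simp
      refine h2.trans ((td_le_ncard (Set.finite_range _)).trans ?_)
      rw [← Set.image_univ]
      refine (Set.ncard_image_le).trans ?_
      simp
    have h2 : d - 1 ≤ dq (Q.comap π) := by
      choose Y hY using fun j => (Ideal.Quotient.mk_surjective.comp hπ) (y j)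
      have := td_F1 (k := k) (fun j => aeval (gp (Q.comap π)) (Y j)) (by
        rw [algebraicIndependent_iff] at hy ⊢
        intro F hF
        apply hy
        have h3 : aeval (gp (Q.comap π)) (aeval Y F) = 0 := by
          rw [← hF, ← AlgHom.comp_apply]
          congr 1
          ext; simp
        rw [aeval_gp_eq_zero] at h3
        have h4 : Ideal.Quotient.mk Q (π (aeval Y F)) = 0 := Ideal.Quotient.eq_zero_iff_mem.2 h3
        rw [← h4]
        have : aeval y = ((Ideal.Quotient.mkₐ k Q).comp ((Ideal.Quotient.mkₐ k q).comp (aeval Y))) := by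
          ext i; simp [← hY, π]
        rw [this]; rfl) (gp (Q.comap π)) (fun i => alg_of_mem_adjoin (aeval_mem_adjoin _ _))
      simpa [dq] using this
    omega
end

end

section

abbrev PR (n : ℕ) := MvPolynomial (Fin n) Qbar

theorem aeval_eq_eval' {σ : Type*} (y : σ → Qbar) (f : MvPolynomial σ Qbar) : aeval y f = eval y f := by
  rw [← coe_aeval_eq_eval]; rfl

section
variable {n : ℕ}

/-- the maximal ideal of a point -/
def mp (x : TorusPt n) : Ideal (PR n) := RingHom.ker (eval (fun i => (x i : Qbar)))

instance (x : TorusPt n) : (mp x).IsPrime := RingHom.ker_isPrime _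

theorem mem_mp {x : TorusPt n} {f : PR n} : f ∈ mp x ↔ eval (fun i => (x i : Qbar)) f = 0 := Iff.rfl

theorem X_not_mp (x : TorusPt n) (i : Fin n) : (X i : PR n) ∉ mp x := by
  rw [mem_mp]; simp

/-- vanishing ideal -/
def IS (S : Set (TorusPt n)) : Ideal (PR n) := ⨅ x ∈ S, mp x

theorem mem_IS {S : Set (TorusPt n)} {f : PR n} :
    f ∈ IS S ↔ ∀ x ∈ S, eval (fun i => (x i : Qbar)) f = 0 := by
  simp [IS, Ideal.mem_iInf, mem_mp]

def ZV (I : Ideal (PR n)) : Set (TorusPt n) := {x | I ≤ mp x}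

theorem mem_ZV {I : Ideal (PR n)} {x : TorusPt n} : x ∈ ZV I ↔ I ≤ mp x := Iff.rfl

theorem ZClosed_ZV (I : Ideal (PR n)) : ZClosed (ZV I) := ⟨I, rfl⟩

theorem ZV_IS {S : Set (TorusPt n)} (hS : ZClosed S) : ZV (IS S) = S := by
  obtain ⟨I, rfl⟩ := hS
  ext x
  refine ⟨fun h f hf => h (mem_IS.2 fun y hy => hy f hf), fun h f hf => mem_IS.1 hf x h⟩

theorem IS_anti {S T : Set (TorusPt n)} (h : S ⊆ T) : IS T ≤ IS S := fun _ hf =>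
  mem_IS.2 fun x hx => mem_IS.1 hf x (h hx)

theorem ZV_anti {S T : Ideal (PR n)} (h : S ≤ T) : ZV T ⊆ ZV S := fun _ hx => h.trans hx

theorem IS_prime {S : Set (TorusPt n)} (hS : ZIrred S) : (IS S).IsPrime := by
  refine ⟨?_, ?_⟩
  · obtain ⟨x, hx⟩ := hS.1
    intro h
    have : (1 : PR n) ∈ IS S := by rw [h]; trivial
    simpa using mem_IS.1 this x hx
  · intro f g hfg
    have := hS.2 (ZV (Ideal.span {f})) (ZV (Ideal.span {g})) (ZClosed_ZV _) (ZClosed_ZV _) (by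
      intro x hx
      have := mem_IS.1 hfg x hx
      rw [map_mul, mul_eq_zero] at this
      simpa [mem_ZV, Ideal.span_singleton_le_iff_mem, mem_mp] using this)
    rcases this with h | h
    · left; exact mem_IS.2 fun x hx => h hx (Ideal.mem_span_singleton_self f)
    · right; exact mem_IS.2 fun x hx => h hx (Ideal.mem_span_singleton_self g)

theorem X_not_IS {S : Set (TorusPt n)} (hS : S.Nonempty) (i : Fin n) : (X i : PR n) ∉ IS S := by
  obtain ⟨x, hx⟩ := hS
  intro h
  exact X_not_mp x i (mem_IS.1 h x hx)

theorem IS_ZV (q : Ideal (PR n)) [hq : q.IsPrime] (hX : ∀ i, (X i : PR n) ∉ q) : IS (ZV q) = q := by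
  refine le_antisymm ?_ (fun f hf => mem_IS.2 fun x (hx : q ≤ mp x) => hx hf)
  intro f hf
  have h1 : f * ∏ i, X i ∈ vanishingIdeal Qbar (zeroLocus Qbar q) := by
    rw [mem_vanishingIdeal_iff]
    intro y hy
    rw [mem_zeroLocus_iff] at hy
    by_cases h0 : ∀ i, y i ≠ 0
    · have : eval y f = 0 := mem_IS.1 hf (fun i => Units.mk0 (y i) (h0 i)) (fun g hg => by
        have := hy g hg
        rwa [aeval_eq_eval'] at this)
      rw [aeval_eq_eval']
      simp [this]
    · push Not at h0
      obtain ⟨i, hi⟩ := h0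
      rw [map_mul, map_prod, Finset.prod_eq_zero (Finset.mem_univ i) (by simpa using hi), mul_zero]
  rw [IsPrime.vanishingIdeal_zeroLocus] at h1
  refine (hq.mem_or_mem h1).resolve_right fun h => ?_
  obtain ⟨i, -, hi⟩ := hq.prod_mem_iff.1 h
  exact hX i hi

theorem ZIrred_ZV (q : Ideal (PR n)) [hq : q.IsPrime] (hX : ∀ i, (X i : PR n) ∉ q) : ZIrred (ZV q) := by
  have hI := IS_ZV q hX
  refine ⟨?_, ?_⟩
  · by_contra h
    rw [Set.not_nonempty_iff_eq_empty] at h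
    rw [h] at hI
    apply hq.ne_top
    rw [← hI]; simp [IS]
  · intro Z₁ Z₂ h1 h2 h
    have : IS Z₁ * IS Z₂ ≤ q := by
      rw [Ideal.mul_le]
      intro f hf g hg
      rw [← hI, mem_IS]
      intro x hx
      rw [map_mul]
      rcases h hx with h | h
      · rw [mem_IS.1 hf x h, zero_mul]
      · rw [mem_IS.1 hg x h, mul_zero]
    rw [Ideal.IsPrime.mul_le hq] at this
    rcases this with h | h
    · left; exact (ZV_anti h).trans (ZV_IS h1).le
    · right; exact (ZV_anti h).trans (ZV_IS h2).le

theorem dq_anti {q q' : Ideal (PR n)} [q.IsPrime] [q'.IsPrime] (h : q ≤ q') : dq q' ≤ dq q := by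
  rcases h.eq_or_lt with rfl | h
  · exact le_rfl
  · exact (dq_lt h).le

theorem chain_le (S : Set (TorusPt n)) (d e : ℕ)
    (h : ∀ Z ⊆ S, ZClosed Z → ∀ hZ : ZIrred Z, @dq _ _ n (IS Z) (IS_prime hZ) ≤ d)
    (Z : Fin (e + 1) → Set (TorusPt n)) (hZ : ∀ i, ZClosed (Z i) ∧ ZIrred (Z i) ∧ Z i ⊆ S)
    (hlt : ∀ i j : Fin (e + 1), i < j → Z i ⊂ Z j) : e ≤ d := by
  have key : ∀ i : ℕ, ∀ hi : i < e + 1, i ≤ @dq _ _ n (IS (Z ⟨i, hi⟩)) (IS_prime (hZ _).2.1) := by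
    intro i
    induction i with
    | zero => intros; omega
    | succ i ih =>
      intro hi
      have h1 := ih (by omega)
      haveI := IS_prime (hZ ⟨i, by omega⟩).2.1
      haveI := IS_prime (hZ ⟨i+1, hi⟩).2.1
      have hlt' := hlt ⟨i, by omega⟩ ⟨i+1, hi⟩ (by simp)
      have : IS (Z ⟨i+1, hi⟩) < IS (Z ⟨i, by omega⟩) := by
        refine lt_of_le_of_ne (IS_anti hlt'.1) fun h => hlt'.ne ?_
        rw [← ZV_IS (hZ ⟨i, by omega⟩).1, ← h, ZV_IS (hZ _).1]
      have := dq_lt this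
      omega
  exact (key e (by omega)).trans (h _ (hZ _).2.2 (hZ _).1 (hZ _).2.1)

theorem zdim_bdd (S : Set (TorusPt n)) : BddAbove {d : ℕ | ∃ Z : Fin (d + 1) → Set (TorusPt n),
    (∀ i, ZClosed (Z i) ∧ ZIrred (Z i) ∧ Z i ⊆ S) ∧
    ∀ i j : Fin (d + 1), i < j → Z i ⊂ Z j} :=
  ⟨n, fun e ⟨Z, hZ, hlt⟩ => chain_le S n e (fun _ _ _ hZ => @dq_le _ _ n _ (IS_prime hZ)) Z hZ hlt⟩

theorem zdim_le (S : Set (TorusPt n)) (d : ℕ)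
    (h : ∀ Z ⊆ S, ZClosed Z → ∀ hZ : ZIrred Z, @dq _ _ n (IS Z) (IS_prime hZ) ≤ d) : zdim S ≤ d :=
  csSup_le' fun e ⟨Z, hZ, hlt⟩ => chain_le S d e h Z hZ hlt

theorem zdim_mono {S T : Set (TorusPt n)} (h : S ⊆ T) : zdim S ≤ zdim T :=
  csSup_le' fun e ⟨Z, hZ, hlt⟩ => le_csSup (zdim_bdd T)
    ⟨Z, fun i => ⟨(hZ i).1, (hZ i).2.1, (hZ i).2.2.trans h⟩, hlt⟩

theorem dq_mp (x : TorusPt n) : dq (mp x) = 0 := by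
  rw [dq_eq (mp x) (fun i => (x i : Qbar)) (fun f => by rw [mem_mp, aeval_eq_eval'])]
  have := td_le_of_alg (k := Qbar) (s := Set.range fun i => (x i : Qbar)) (t := ∅) (Set.finite_range _)
    Set.finite_empty (fun a _ => alg_of_mem_adjoin (Subalgebra.algebraMap_mem _ a))
  have h2 := td_le_ncard (k := Qbar) (L := Qbar) Set.finite_empty
  simp at h2
  omega

theorem X_not_of_le {q : Ideal (PR n)} {x : TorusPt n} (h : q ≤ mp x) (i : Fin n) : (X i : PR n) ∉ q :=
  fun hi => X_not_mp x i (h hi)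

theorem exists_chain (x : TorusPt n) (d : ℕ) : ∀ (q : Ideal (PR n)) [q.IsPrime], q ≤ mp x → dq q = d →
    ∃ Z : Fin (d + 1) → Set (TorusPt n), (∀ i, ZClosed (Z i) ∧ ZIrred (Z i) ∧ Z i ⊆ ZV q) ∧
    ∀ i j : Fin (d + 1), i < j → Z i ⊂ Z j := by
  induction d with
  | zero =>
    intro q _ hq _
    exact ⟨fun _ => ZV q, fun i => ⟨ZClosed_ZV q, ZIrred_ZV q (X_not_of_le hq), subset_rfl⟩,
      fun i j hij => by omega⟩
  | succ d ih =>
    intro q _ hq hd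
    have hne : q < mp x := by
      refine lt_of_le_of_ne hq ?_
      rintro rfl
      rw [dq_mp] at hd; omega
    obtain ⟨f, hf, hfq⟩ := SetLike.exists_of_lt hne
    obtain ⟨q', hq', h1, h2, h3, h4⟩ := dq_H q (mp x) hq f hfq hf
    have hlt : q < q' := lt_of_le_of_ne h1 (by rintro rfl; exact hfq h2)
    have h5 := dq_lt hlt
    obtain ⟨Z, hZ, hZlt⟩ := ih q' h3 (by omega)
    have hss : ZV q' ⊂ ZV q := by
      refine ⟨ZV_anti h1, fun h => hlt.not_ge ?_⟩
      rw [← IS_ZV q (X_not_of_le hq), ← IS_ZV q' (X_not_of_le h3)]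
      exact IS_anti h
    refine ⟨Fin.snoc Z (ZV q), ?_, ?_⟩
    · intro i
      refine Fin.lastCases ?_ (fun i => ?_) i
      · simp only [Fin.snoc_last]
        exact ⟨ZClosed_ZV q, ZIrred_ZV q (X_not_of_le hq), subset_rfl⟩
      · simp only [Fin.snoc_castSucc]
        exact ⟨(hZ i).1, (hZ i).2.1, (hZ i).2.2.trans hss.1⟩
    · intro i j
      refine Fin.lastCases ?_ (fun j => ?_) j
      · refine Fin.lastCases ?_ (fun i => ?_) i
        · intro h; exact absurd h (lt_irrefl _)
        · intro _
          simp only [Fin.snoc_last, Fin.snoc_castSucc]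
          exact lt_of_le_of_lt (hZ i).2.2 hss
      · refine Fin.lastCases ?_ (fun i => ?_) i
        · intro h; exact absurd h (by simp [Fin.le_last])
        · intro h
          simp only [Fin.snoc_castSucc]
          exact hZlt i j (by simpa using h)

theorem zdim_ZV (q : Ideal (PR n)) [q.IsPrime] (hX : ∀ i, (X i : PR n) ∉ q) : zdim (ZV q) = dq q := by
  refine le_antisymm (zdim_le _ _ fun Z hZ hc hi => ?_) ?_
  · haveI := IS_prime hi
    apply dq_anti
    rw [← IS_ZV q hX]
    exact IS_anti hZ
  · obtain ⟨x, hx⟩ := (ZIrred_ZV q hX).1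
    exact le_csSup (zdim_bdd _) (exists_chain x _ q hx rfl)

theorem zdim_irr {S : Set (TorusPt n)} (hc : ZClosed S) (hi : ZIrred S) :
    zdim S = @dq _ _ n (IS S) (IS_prime hi) := by
  haveI := IS_prime hi
  conv_lhs => rw [← ZV_IS hc]
  exact zdim_ZV _ (X_not_IS hi.1)
end

end

section

theorem exists_minor {n ρ : ℕ} (m : Fin ρ → Fin n → ℤ) (hm : LinearIndependent ℤ m) :
    ∃ σ : Fin ρ → Fin n, Function.Injective σ ∧ (Matrix.of fun i j => m i (σ j)).det ≠ 0 := by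
  let J : (Fin n → ℤ) →ₗ[ℤ] (Fin n → ℚ) :=
    { toFun := fun v a => (v a : ℚ)
      map_add' := by intros; ext; simp
      map_smul' := by intros; ext; simp }
  have hJ : Function.Injective J := fun a b h => by
    ext i
    have h1 : ((a i : ℤ) : ℚ) = (b i : ℤ) := congrFun h i
    exact_mod_cast h1
  have h1 : LinearIndependent ℤ (J ∘ m) := hm.map' J (LinearMap.ker_eq_bot.2 hJ)
  rw [LinearIndependent.iff_fractionRing ℤ ℚ] at h1
  let M : Matrix (Fin ρ) (Fin n) ℚ := Matrix.of (J ∘ m)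
  have hr : M.rank = ρ := by
    have := LinearIndependent.rank_matrix (M := M) h1
    simpa using this
  rw [Matrix.rank_eq_finrank_span_cols] at hr
  obtain ⟨κ, a, ha, hs, hli⟩ := exists_linearIndependent' ℚ M.col
  haveI : Finite κ := Finite.of_injective a ha
  haveI := Fintype.ofFinite κ
  have hc : Fintype.card κ = ρ := by
    rw [← hr, ← hs, finrank_span_eq_card hli]
  let e : Fin ρ ≃ κ := (Fintype.equivFinOfCardEq hc).symm
  refine ⟨a ∘ e, ha.comp e.injective, ?_⟩
  have h2 : LinearIndependent ℚ ((M.col ∘ a) ∘ e) := hli.comp e e.injective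
  let A : Matrix (Fin ρ) (Fin ρ) ℚ := Matrix.of ((M.col ∘ a) ∘ e)
  have h3 : IsUnit A := Matrix.linearIndependent_rows_iff_isUnit.1 h2
  rw [Matrix.isUnit_iff_isUnit_det] at h3
  intro h0
  apply h3.ne_zero
  rw [← Matrix.det_transpose]
  have : A.transpose = (Matrix.of fun i j => m i ((a ∘ e) j)).map (Int.castRingHom ℚ) := by
    ext i j; simp [A, M, J]
  rw [this, ← RingHom.mapMatrix_apply, ← RingHom.map_det, h0]; simp

theorem alg_zpow {K L : Type*} [Field K] [Field L] [Algebra K L] (x : L) (N : ℤ) (hN : N ≠ 0)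
    (h : IsAlgebraic K (x ^ N)) : IsAlgebraic K x := by
  have : IsAlgebraic K (x ^ N.natAbs) := by
    rcases Int.natAbs_eq N with h1 | h1
    · rw [h1, zpow_natCast] at h; exact h
    · rw [h1, zpow_neg, zpow_natCast] at h; simpa using h.inv
  exact this.of_pow (Int.natAbs_pos.2 hN)

theorem td_C {k L : Type*} [Field k] [Field L] [Algebra k L] {n ρ : ℕ} (m : Fin ρ → Fin n → ℤ)
    (hm : LinearIndependent ℤ m) (ξ : Fin n → L) (hξ : ∀ i, ξ i ≠ 0)
    (h : ∀ j, ∃ c, tmon ξ (m j) = algebraMap k L c) : td k (Set.range ξ) + ρ ≤ n := by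
  obtain ⟨σ, hσ, hdet⟩ := exists_minor m hm
  set A := (Matrix.of fun i j => m i (σ j)) with hA
  let T := ξ '' (Set.range σ)ᶜ
  have hT : T.Finite := (Set.toFinite _).image _
  have hTc : T.ncard + ρ ≤ n := by
    have h1 : T.ncard ≤ ((Set.range σ)ᶜ).ncard := Set.ncard_image_le
    have h2 := Set.ncard_add_ncard_compl (Set.range σ)
    rw [← Set.image_univ, Set.ncard_image_of_injective _ hσ, Set.image_univ] at h2
    simp at h2
    omega
  have key : td k (Set.range ξ) ≤ td k T := by
    refine td_le_of_alg (Set.finite_range _) hT ?_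
    rintro _ ⟨a, rfl⟩
    rw [alg_adjoin_iff]
    by_cases ha : a ∈ Set.range σ
    · obtain ⟨i, rfl⟩ := ha
      refine alg_zpow _ A.det hdet ?_
      let v : Fin n → ℤ := ∑ l, A.adjugate i l • m l
      have hv : ∀ j, v (σ j) = if i = j then A.det else 0 := by
        intro j
        have := congrFun (congrFun A.adjugate_mul i) j
        rw [Matrix.mul_apply] at this
        simp only [v, Finset.sum_apply, Pi.smul_apply, smul_eq_mul]
        rw [show (∑ l, A.adjugate i l * m l (σ j)) = ∑ l, A.adjugate i l * A l j from rfl, this]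
        simp [Matrix.one_apply]
      have h1 : tmon ξ v ∈ IntermediateField.adjoin k T := by
        refine Finset.sum_induction _ (fun w => tmon ξ w ∈ IntermediateField.adjoin k T) ?_ ?_ ?_
        · intro w w' hw hw'
          rw [tmon_add ξ hξ]; exact mul_mem hw hw'
        · simp [tmon]
        · intro l _
          rw [tmon_smul]
          obtain ⟨c, hc⟩ := h l
          rw [hc]
          exact zpow_mem (IntermediateField.algebraMap_mem _ c) _
      have h2 : tmon ξ (Pi.single (σ i) A.det - v) ∈ IntermediateField.adjoin k T := by
        refine prod_mem fun b _ => ?_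
        by_cases hb : b ∈ Set.range σ
        · obtain ⟨j, rfl⟩ := hb
          have : (Pi.single (σ i) A.det - v : Fin n → ℤ) (σ j) = 0 := by
            rw [Pi.sub_apply, hv, Pi.single_apply]
            by_cases hij : i = j
            · subst hij; simp
            · have : ¬ σ j = σ i := fun h => hij (hσ h.symm)
              simp [hij, this]
          rw [this, zpow_zero]; exact one_mem _
        · have hbT : ξ b ∈ T := ⟨b, hb, rfl⟩
          exact zpow_mem (IntermediateField.subset_adjoin k T hbT) _
      have h3 : ξ (σ i) ^ A.det ∈ IntermediateField.adjoin k T := by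
        have : ξ (σ i) ^ A.det = tmon ξ v * tmon ξ (Pi.single (σ i) A.det - v) := by
          rw [← tmon_add ξ hξ, add_sub_cancel, tmon, Finset.prod_eq_single (σ i)]
          · simp
          · intro b _ hb; simp [Pi.single_apply, hb]
          · simp
        rw [this]; exact mul_mem h1 h2
      exact alg_adjoin_iff.1 (alg_of_mem h3)
    · exact alg_adjoin_iff.1 (alg_of_mem (IntermediateField.subset_adjoin _ _ ⟨a, ha, rfl⟩))
  have := td_le_ncard (k := k) hT
  omega

section
variable {n : ℕ}

/-- the binomial relation `x ^ m = c` -/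
def relp (c : Qbar) (m : Fin n → ℤ) : PR n :=
  ∏ i, X i ^ (m i).toNat - C c * ∏ i, X i ^ (-m i).toNat

theorem aeval_relp {L : Type*} [Field L] [Algebra Qbar L] (ξ : Fin n → L) (hξ : ∀ i, ξ i ≠ 0)
    (c : Qbar) (m : Fin n → ℤ) : aeval ξ (relp c m) = 0 ↔ tmon ξ m = algebraMap Qbar L c := by
  have h1 : tmon ξ m = (∏ i, ξ i ^ (m i).toNat) / ∏ i, ξ i ^ (-m i).toNat := by
    rw [tmon, ← Finset.prod_div_distrib]
    refine Finset.prod_congr rfl fun i _ => ?_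
    conv_lhs => rw [← Int.toNat_sub_toNat_neg (m i), zpow_sub₀ (hξ i), zpow_natCast, zpow_natCast]
  have h2 : ∏ i, ξ i ^ (-m i).toNat ≠ 0 := Finset.prod_ne_zero_iff.2 fun i _ => pow_ne_zero _ (hξ i)
  rw [h1, div_eq_iff h2]
  simp [relp, sub_eq_zero]

abbrev cp (x : TorusPt n) : Fin n → Qbar := fun i => (x i : Qbar)

theorem cp_ne (x : TorusPt n) (i) : cp x i ≠ 0 := (x i).ne_zero

theorem relp_mp {x : TorusPt n} {c : Qbar} {m : Fin n → ℤ} :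
    relp c m ∈ mp x ↔ tmon (cp x) m = c := by
  rw [mem_mp, ← aeval_eq_eval']
  exact aeval_relp (cp x) (cp_ne x) c m

theorem gp_ne {q : Ideal (PR n)} [q.IsPrime] (hX : ∀ i, (X i : PR n) ∉ q) (i : Fin n) : gp q i ≠ 0 := by
  intro h
  apply hX i
  rw [← aeval_gp_eq_zero]; simpa using h

theorem clear_denom {ρ : ℕ} (m : Fin ρ → Fin n → ℤ) (f : MvPolynomial (Fin ρ) Qbar) :
    ∃ (N : ℕ) (G : PR n), ∀ (L : Type) [Field L] [Algebra Qbar L] (ξ : Fin n → L) (_ : ∀ i, ξ i ≠ 0),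
      aeval ξ G = (∏ i, ξ i) ^ N * aeval (fun j => tmon ξ (m j)) f := by
  induction f using MvPolynomial.induction_on with
  | C a => exact ⟨0, C a, by intros; simp⟩
  | add p q hp hq =>
    obtain ⟨N, G, h⟩ := hp
    obtain ⟨N', G', h'⟩ := hq
    refine ⟨N + N', (∏ i, X i) ^ N' * G + (∏ i, X i) ^ N * G', ?_⟩
    intro L _ _ ξ hξ
    rw [map_add, map_mul, map_mul, h L ξ hξ, h' L ξ hξ]
    simp
    ring
  | mul_X p j hp =>
    obtain ⟨N, G, h⟩ := hp
    refine ⟨N + ∑ i, (m j i).natAbs, G * ∏ a, X a ^ ((∑ i, (m j i).natAbs : ℕ) + m j a).toNat, ?_⟩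
    intro L _ _ ξ hξ
    rw [map_mul, h L ξ hξ, pow_add, map_mul, aeval_X, mul_assoc, mul_assoc, mul_left_comm (_ ^ (∑ i, (m j i).natAbs))]
    congr 2
    rw [← Finset.prod_pow, tmon, ← Finset.prod_mul_distrib, map_prod]
    refine Finset.prod_congr rfl fun a _ => ?_
    have : (m j a).natAbs ≤ ∑ i, (m j i).natAbs :=
      Finset.single_le_sum (f := fun i => (m j i).natAbs) (fun _ _ => Nat.zero_le _) (Finset.mem_univ a)
    rw [map_pow, aeval_X, ← zpow_natCast, Int.toNat_of_nonneg (by omega), zpow_add₀ (hξ a), zpow_natCast]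

theorem lemA {ρ : ℕ} (m : Fin ρ → Fin n → ℤ) (p : TorusPt n) (d : ℕ) : ∀ (q : Ideal (PR n)) [q.IsPrime],
    q ≤ mp p → td Qbar (Set.range fun j => tmon (gp q) (m j)) = d →
    ∃ (q' : Ideal (PR n)) (_ : q'.IsPrime), q ≤ q' ∧ q' ≤ mp p ∧
      (∀ j, relp (tmon (cp p) (m j)) (m j) ∈ q') ∧ dq q ≤ dq q' + d := by
  induction d using Nat.strong_induction_on with
  | _ d ih =>
    intro q hq hqp hd
    by_cases hall : ∀ j, relp (tmon (cp p) (m j)) (m j) ∈ q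
    · exact ⟨q, hq, le_rfl, hqp, hall, by omega⟩
    · push Not at hall
      obtain ⟨j, hj⟩ := hall
      obtain ⟨q1, hq1, h1, h2, h3, h4⟩ := dq_H q (mp p) hqp _ hj (relp_mp.2 rfl)
      have hn := gp_ne (X_not_of_le hqp)
      have hn1 := gp_ne (X_not_of_le h3)
      have hlt := td_Drop (k := Qbar) (fun j => tmon (gp q) (m j)) (fun j => tmon (gp q1) (m j)) (by
        intro f hf
        obtain ⟨N, G, hG⟩ := clear_denom m f
        have e1 := hG _ (gp q) hn
        rw [hf, mul_zero, aeval_gp_eq_zero] at e1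
        have e2 := hG _ (gp q1) hn1
        rw [aeval_gp_eq_zero.2 (h1 e1)] at e2
        exact (mul_eq_zero.1 e2.symm).resolve_left
          (pow_ne_zero _ (Finset.prod_ne_zero_iff.2 fun i _ => hn1 i))) (X j - C (tmon (cp p) (m j))) (by
        have := (aeval_relp _ hn1 _ _).1 (aeval_gp_eq_zero.2 h2)
        simp [this]) (by
        intro h0
        apply hj
        rw [← aeval_gp_eq_zero, aeval_relp _ hn]
        simpa [sub_eq_zero] using h0)
      rw [hd] at hlt
      obtain ⟨q', hq', g1, g2, g3, g4⟩ := ih _ hlt q1 h3 rfl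
      exact ⟨q', hq', h1.trans g1, g2, g3, by omega⟩

theorem dq_bot : dq (⊥ : Ideal (PR n)) = n := by
  refine le_antisymm (dq_le _) ?_
  have := td_F1 (k := Qbar) (gp (⊥ : Ideal (PR n))) (by
    rw [algebraicIndependent_iff]
    intro f hf
    simpa using aeval_gp_eq_zero.1 hf) (gp (⊥ : Ideal (PR n)))
    (fun i => alg_of_mem_adjoin (Algebra.subset_adjoin ⟨i, rfl⟩))
  simpa [dq] using this

theorem dq_ge_coset {ρ : ℕ} (m : Fin ρ → Fin n → ℤ) (p : TorusPt n) :
    n ≤ zdim {x : TorusPt n | ∀ j, tmon (cp x) (m j) = tmon (cp p) (m j)} + ρ := by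
  obtain ⟨q', hq', -, h1, h2, h3⟩ := lemA m p _ ⊥ bot_le rfl
  rw [dq_bot] at h3
  have h4 : td Qbar (Set.range fun j => tmon (gp (⊥ : Ideal (PR n))) (m j)) ≤ ρ := by
    refine (td_le_ncard (Set.finite_range _)).trans ?_
    rw [← Set.image_univ]
    refine (Set.ncard_image_le).trans ?_
    simp
  have h5 : dq q' ≤ zdim {x : TorusPt n | ∀ j, tmon (cp x) (m j) = tmon (cp p) (m j)} := by
    rw [← zdim_ZV q' (X_not_of_le h1)]
    exact zdim_mono fun x hx j => relp_mp.1 (hx (h2 j))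
  omega

theorem coset_le {ρ : ℕ} (m : Fin ρ → Fin n → ℤ) (hm : LinearIndependent ℤ m) (p : TorusPt n) :
    zdim {x : TorusPt n | ∀ j, tmon (cp x) (m j) = tmon (cp p) (m j)} + ρ ≤ n := by
  have key : ∀ Z ⊆ {x : TorusPt n | ∀ j, tmon (cp x) (m j) = tmon (cp p) (m j)}, ZClosed Z →
      ∀ hZ : ZIrred Z, @dq _ _ n (IS Z) (IS_prime hZ) + ρ ≤ n := by
    intro Z hZ hc hi
    haveI := IS_prime hi
    have hn := gp_ne (X_not_IS hi.1)
    refine td_C m hm (gp (IS Z)) hn fun j => ⟨tmon (cp p) (m j), ?_⟩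
    rw [← aeval_relp _ hn, aeval_gp_eq_zero, mem_IS]
    intro x hx
    exact relp_mp.2 (hZ hx j)
  have hρ : ρ ≤ n := by
    simpa using hm.fintype_card_le_finrank
  have := zdim_le {x : TorusPt n | ∀ j, tmon (cp x) (m j) = tmon (cp p) (m j)} (n - ρ) (by
    intro Z hZ hc hi
    have := key Z hZ hc hi
    omega)
  omega

theorem cp_mul (x y : TorusPt n) (m : Fin n → ℤ) : tmon (cp (x * y)) m = tmon (cp x) m * tmon (cp y) m := by
  simp [tmon, cp, mul_zpow, Finset.prod_mul_distrib]

theorem cp_inv (x : TorusPt n) (m : Fin n → ℤ) : tmon (cp x⁻¹) m = (tmon (cp x) m)⁻¹ := by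
  simp [tmon, cp]

theorem cp_one (m : Fin n → ℤ) : tmon (cp (1 : TorusPt n)) m = 1 := by
  simp [tmon, cp]

theorem coset_is {ρ : ℕ} (m : Fin ρ → Fin n → ℤ) (p : TorusPt n) :
    IsCoset {x : TorusPt n | ∀ j, tmon (cp x) (m j) = tmon (cp p) (m j)} := by
  refine ⟨p, {x | ∀ j, tmon (cp x) (m j) = 1}, ⟨?_, ?_, ?_, ?_⟩, ?_⟩
  · refine ⟨Set.range fun j => relp 1 (m j), ?_⟩
    ext x
    simp only [Set.mem_setOf_eq, Set.forall_mem_range]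
    exact forall_congr' fun j => relp_mp.symm
  · intro j; exact cp_one _
  · intro x hx y hy j; rw [cp_mul, hx, hy, mul_one]
  · intro x hx j; rw [cp_inv, hx, inv_one]
  · ext x
    constructor
    · intro hx
      refine ⟨p⁻¹ * x, ?_, by simp⟩
      intro j
      rw [cp_mul, cp_inv, hx j, inv_mul_cancel₀ (tmon_ne_zero _ (cp_ne p) _)]
    · rintro ⟨y, hy, rfl⟩ j
      change tmon (cp (p * y)) _ = _
      rw [cp_mul, hy, mul_one]

end

end

section

theorem axdata_mk {k L : Type*} [Field k] [Field L] [Algebra k L] [CharZero L] {n ρ : ℕ}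
    (ξ : Fin n → L) (hξ : ∀ i, ξ i ≠ 0) (E : Finset (Fin n))
    (hE : AlgebraicIndependent k (fun i : E => ξ i)) (m : Fin ρ → Fin n → ℤ)
    (hm : LinearIndependent ℤ m) (hc : ∀ j, ∃ c, tmon ξ (m j) = algebraMap k L c) :
    ∃ P : Finset (Fin n), P.card = ρ ∧ AxData k ξ E P := by
  classical
  obtain ⟨σ, hσ, hdet⟩ := exists_minor m hm
  obtain ⟨t, hst, ht⟩ := exists_isTranscendenceBasis_superset (R := k) (s := Set.range fun i : E => ξ i)
    hE.coe_range
  choose D hD using fun l : Fin n => dext_exists (K := k) (fun x : t => (x : L)) ht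
    (fun x => if (x : L) = ξ l then 1 else 0)
  refine ⟨Finset.univ.map ⟨σ, hσ⟩, by simp, hξ, D, ?_, Function.extend σ (fun i a => (m i a : L)) 0, ?_, ?_, ?_⟩
  · intro j hj i hi
    have := hD j ⟨ξ i, hst ⟨⟨i, hi⟩, rfl⟩⟩
    simp only at this
    rw [this]
    have hiff : ξ i = ξ j ↔ i = j :=
      ⟨fun h => congrArg Subtype.val (hE.injective (a₁ := ⟨i, hi⟩) (a₂ := ⟨j, hj⟩) h), fun h => by rw [h]⟩
    simp [hiff]
  · intro j hj l a
    simp at hj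
    obtain ⟨i, rfl⟩ := hj
    rw [hσ.extend_apply]
    simp
  · let e : Fin ρ ≃ (Finset.univ.map ⟨σ, hσ⟩ : Finset (Fin n)) :=
      Equiv.ofBijective (fun i => ⟨σ i, by simp⟩) ⟨fun a b h => hσ (by simpa using h), by
        rintro ⟨a, ha⟩
        simp at ha
        obtain ⟨i, rfl⟩ := ha
        exact ⟨i, rfl⟩⟩
    rw [← Matrix.det_submatrix_equiv_self e]
    have : ((Matrix.of fun (i j : (Finset.univ.map ⟨σ, hσ⟩ : Finset (Fin n))) =>
        Function.extend σ (fun i a => (m i a : L)) 0 j i).submatrix e e) =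
        ((Matrix.of fun i j => m i (σ j)).map (Int.castRingHom L)).transpose := by
      ext i j
      simp only [Matrix.submatrix_apply, Matrix.of_apply, Matrix.transpose_apply, Matrix.map_apply]
      change Function.extend σ (fun i a => (m i a : L)) 0 (σ j) (σ i) = _
      rw [hσ.extend_apply]; simp
    rw [this, Matrix.det_transpose, ← RingHom.mapMatrix_apply, ← RingHom.map_det]
    simpa using hdet
  · intro l j hj
    simp at hj
    obtain ⟨i, rfl⟩ := hj
    rw [hσ.extend_apply, ← logd_tmon (D l) ξ hξ]
    obtain ⟨c, hc⟩ := hc i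
    rw [hc]; simp

section
variable {n : ℕ}

/-- characters trivial on a subgroup -/
def charLat (H : Set (TorusPt n)) : Submodule ℤ (Fin n → ℤ) where
  carrier := {m | ∀ h ∈ H, tmon (cp h) m = 1}
  add_mem' := by
    intro a b ha hb h hh
    rw [tmon_add _ (cp_ne h), ha h hh, hb h hh, mul_one]
  zero_mem' := by intro h hh; simp [tmon]
  smul_mem' := by
    intro c a ha h hh
    rw [tmon_smul, ha h hh, one_zpow]

theorem mem_of_charLat {H : Set (TorusPt n)} (hH : IsAlgSubgroup H) (x : TorusPt n)
    (hx : ∀ m ∈ charLat H, tmon (cp x) m = 1) : x ∈ H := by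
  obtain ⟨hcl, h1, hmul, -⟩ := hH
  let Hs : Submonoid (TorusPt n) := { carrier := H, one_mem' := h1, mul_mem' := fun ha hb => hmul _ ha _ hb }
  rw [← ZV_IS hcl]
  intro f hf
  rw [mem_mp, eval_eq']
  let χ : (Fin n →₀ ℕ) → (Hs →* Qbar) := fun a =>
    { toFun := fun h => ∏ i, (h.1 i : Qbar) ^ a i
      map_one' := by simp
      map_mul' := by intro y z; simp [mul_pow, Finset.prod_mul_distrib] }
  let φ0 : (Fin n →₀ ℕ) → Qbar := fun a => ∏ i, (x i : Qbar) ^ a i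
  have hfac : Function.FactorsThrough φ0 χ := by
    intro a b hab
    have hmono : ∀ y : TorusPt n, (∏ i, (y i : Qbar) ^ a i) = ∏ i, (y i : Qbar) ^ b i ↔
        tmon (cp y) (fun i => (a i : ℤ) - b i) = 1 := by
      intro y
      have : tmon (cp y) (fun i => (a i : ℤ) - b i) = (∏ i, (y i : Qbar) ^ a i) / ∏ i, (y i : Qbar) ^ b i := by
        rw [tmon, ← Finset.prod_div_distrib]
        refine Finset.prod_congr rfl fun i _ => ?_
        rw [zpow_sub₀ (cp_ne y i), zpow_natCast, zpow_natCast]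
      rw [this, div_eq_one_iff_eq]
      exact Finset.prod_ne_zero_iff.2 fun i _ => pow_ne_zero _ (cp_ne y i)
    refine (hmono x).2 (hx _ ?_)
    intro h hh
    exact (hmono h).1 (DFunLike.congr_fun hab (⟨h, hh⟩ : Hs))
  let φ : (Hs →* Qbar) → Qbar := Function.extend χ φ0 0
  let l : (Hs →* Qbar) →₀ Qbar := ∑ a ∈ f.support, Finsupp.single (χ a) (f.coeff a)
  have hl : l = 0 := by
    have hind := linearIndependent_monoidHom Hs Qbar
    rw [linearIndependent_iff] at hind
    apply hind
    ext h
    have hfh := mem_IS.1 hf h.1 h.2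
    rw [eval_eq'] at hfh
    simp only [l, map_sum, Finsupp.linearCombination_single, Finset.sum_apply, Pi.smul_apply, smul_eq_mul, Pi.zero_apply]
    exact hfh
  have := congrArg (Finsupp.linearCombination Qbar φ) hl
  simp only [l, map_sum, Finsupp.linearCombination_single, map_zero, φ, hfac.extend_apply, smul_eq_mul] at this
  exact this

theorem lemB {C : Set (TorusPt n)} (hC : IsCoset C) : ∃ (ρ : ℕ) (m : Fin ρ → Fin n → ℤ) (g : TorusPt n),
    LinearIndependent ℤ m ∧ (∀ x ∈ C, ∀ j, tmon (cp x) (m j) = tmon (cp g) (m j)) ∧ n ≤ zdim C + ρ := by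
  obtain ⟨g, H, hH, rfl⟩ := hC
  obtain ⟨ρ, b⟩ := Submodule.basisOfPid (Pi.basisFun ℤ (Fin n)) (charLat H)
  refine ⟨ρ, fun j => (b j : Fin n → ℤ), g, ?_, ?_, ?_⟩
  · exact b.linearIndependent.map' (charLat H).subtype (by simp)
  · rintro _ ⟨h, hh, rfl⟩ j
    change tmon (cp (g * h)) _ = _
    rw [cp_mul, (b j).2 h hh, mul_one]
  · refine (dq_ge_coset (fun j => (b j : Fin n → ℤ)) g).trans ?_
    gcongr
    apply zdim_mono
    intro x hx
    refine ⟨g⁻¹ * x, ?_, by simp⟩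
    apply mem_of_charLat hH
    intro m hm
    have hm' : m = ∑ j, b.repr ⟨m, hm⟩ j • (b j : Fin n → ℤ) := by
      have := congrArg (charLat H).subtype (b.sum_repr ⟨m, hm⟩)
      rw [map_sum] at this
      simpa only [map_smul, Submodule.subtype_apply] using this.symm
    rw [hm']
    refine Finset.sum_induction _ (fun w => tmon (cp (g⁻¹ * x)) w = 1) ?_ ?_ ?_
    · intro w w' hw hw'
      rw [tmon_add _ (cp_ne _), hw, hw', mul_one]
    · simp [tmon]
    · intro j _
      rw [tmon_smul, cp_mul, cp_inv, hx j, inv_mul_cancel₀ (tmon_ne_zero _ (cp_ne g) _), one_zpow]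

instance (q : Ideal (PR n)) [q.IsPrime] : CharZero (FractionRing (PR n ⧸ q)) :=
  charZero_of_injective_algebraMap (algebraMap Qbar _).injective

theorem axdata_of_anom {X Y : Set (TorusPt n)} {s : ℕ} (h : IsAnomalous X Y s) :
    ∃ E P : Finset (Fin n), 1 ≤ E.card ∧ s < E.card + P.card ∧
      haveI := IS_prime h.2.2.1
      AxData Qbar (gp (IS Y)) E P := by
  obtain ⟨hYX, hc, hi, h1, H, hH, hYH, hlt⟩ := h
  haveI := IS_prime hi
  rw [zdim_irr hc hi] at h1 hlt
  obtain ⟨E, hE, hEc, -⟩ := td_F2 (k := Qbar) (gp (IS Y))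
  obtain ⟨ρ, m, g, hm, hg, hn⟩ := lemB hH
  have hn0 := gp_ne (X_not_IS hi.1)
  obtain ⟨P, hP, hax⟩ := axdata_mk (gp (IS Y)) hn0 E hE m hm (fun j => ⟨tmon (cp g) (m j), by
    rw [← aeval_relp _ hn0, aeval_gp_eq_zero, mem_IS]
    intro x hx
    exact relp_mp.2 (hg x (hYH hx) j)⟩)
  refine ⟨E, P, ?_, ?_, hax⟩
  · rw [hEc]; exact h1
  · rw [hEc]
    have : dq (IS Y) = td Qbar (Set.range (gp (IS Y))) := rfl
    omega
end

end

section

theorem ultra_exists {k ι : Type} [Field k] (U : Ultrafilter ι) (F : ι → Type) [∀ i, Field (F i)]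
    [∀ i, Algebra k (F i)] : ∃ (L : Type) (_ : Field L) (_ : Algebra k L) (π : (∀ i, F i) →ₐ[k] L),
      Function.Surjective π ∧ ∀ x, π x = 0 ↔ ∀ᶠ i in U, x i = 0 := by
  let M : Ideal (∀ i, F i) :=
    { carrier := {x | ∀ᶠ i in U, x i = 0}
      add_mem' := by
        intro a b ha hb
        filter_upwards [ha, hb] with i h1 h2
        simp [h1, h2]
      zero_mem' := by simp
      smul_mem' := by
        intro c x hx
        filter_upwards [hx] with i h1
        simp [h1] }
  have hM : M.IsMaximal := by
    rw [Ideal.isMaximal_iff]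
    refine ⟨fun h => ?_, ?_⟩
    · have h' : ∀ᶠ i in U, (1 : ∀ i, F i) i = 0 := h
      obtain ⟨i, hi⟩ := h'.exists
      exact one_ne_zero hi
    · intro J x hMJ hx hxJ
      have h1 : 1 - x⁻¹ * x ∈ M := by
        have : ¬ ∀ᶠ i in U, x i = 0 := hx
        rw [← Ultrafilter.eventually_not] at this
        change ∀ᶠ i in U, (1 - x⁻¹ * x) i = 0
        filter_upwards [this] with i hi
        simp [hi]
      have := J.add_mem (hMJ h1) (J.mul_mem_left x⁻¹ hxJ)
      simpa using this
  exact ⟨(∀ i, F i) ⧸ M, Ideal.Quotient.field M, inferInstance, Ideal.Quotient.mkₐ k M,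
    Ideal.Quotient.mkₐ_surjective k M, fun x => Ideal.Quotient.eq_zero_iff_mem⟩

/-- componentwise derivation -/
def piDer {k ι : Type} [Field k] {F : ι → Type} [∀ i, Field (F i)]
    [∀ i, Algebra k (F i)] (D : ∀ i, Derivation k (F i) (F i)) : Derivation k (∀ i, F i) (∀ i, F i) :=
  Derivation.mk' { toFun := fun x i => D i (x i)
                   map_add' := by intros; ext; simp
                   map_smul' := by intros; ext; simp }
    (by intro a b; ext i; simp)

theorem piDer_apply {k ι : Type} [Field k] {F : ι → Type} [∀ i, Field (F i)]
    [∀ i, Algebra k (F i)] (D : ∀ i, Derivation k (F i) (F i)) (x i) : piDer D x i = D i (x i) := rfl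

theorem ultra_ax {k ι : Type} [Field k] (U : Ultrafilter ι) (F : ι → Type) [∀ i, Field (F i)]
    [∀ i, Algebra k (F i)] {n : ℕ} (ξ : ∀ i, Fin n → F i) (E P : Finset (Fin n))
    (h : ∀ i, AxData k (ξ i) E P) :
    ∃ (L : Type) (_ : Field L) (_ : Algebra k L) (ζ : Fin n → L), AxData k ζ E P ∧
      ∀ f : MvPolynomial (Fin n) k, aeval ζ f = 0 ↔ ∀ᶠ i in U, aeval (ξ i) f = 0 := by
  obtain ⟨L, _, _, π, hπ, h0⟩ := ultra_exists (k := k) U F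
  have hall : ∀ x : ∀ i, F i, (∀ i, x i = 0) → π x = 0 := fun x hx => (h0 x).2 (.of_forall hx)
  have hne : ∀ x : ∀ i, F i, (∀ i, x i ≠ 0) → π x ≠ 0 := by
    intro x hx h1
    obtain ⟨i, hi⟩ := ((h0 x).1 h1).exists
    exact hx i hi
  choose hξ D hD c hc hdet hsum using h
  let DD : Fin n → Derivation k L L := fun l => Derivation.liftOfSurjective hπ (d := piDer fun i => D i l) (by
    intro x hx
    rw [h0] at hx ⊢
    filter_upwards [hx] with i hi
    rw [piDer_apply, hi, map_zero])
  have hDD : ∀ l x, DD l (π x) = π (piDer (fun i => D i l) x) := fun l x =>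
    Derivation.liftOfSurjective_apply hπ _ x
  refine ⟨L, inferInstance, inferInstance, fun a => π fun i => ξ i a,
    ⟨fun a => hne _ fun i => hξ i a, DD, ?_, fun j a => π fun i => c i j a, ?_, ?_, ?_⟩, ?_⟩
  · intro j hj a ha
    rw [hDD]
    have : piDer (fun i => D i j) (fun i => ξ i a) = if a = j then 1 else 0 := by
      ext i
      rw [piDer_apply, hD i j hj a ha]
      split_ifs <;> rfl
    rw [this]
    split_ifs <;> simp
  · intro j hj l a
    rw [hDD]
    apply hall
    intro i
    rw [piDer_apply, hc i j hj]
  · have : (Matrix.of fun (a j : P) => π fun i => c i j a) =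
        (π : (∀ i, F i) →+* L).mapMatrix (Matrix.of fun (a j : P) => fun i => c i j a) := by
      ext a j; rfl
    rw [this, ← RingHom.map_det]
    apply hne
    intro i
    have h2 : (Matrix.of fun (a j : P) => fun i => c i j a).det i =
      (Matrix.of fun (a j : P) => c i j a).det := by
      exact RingHom.map_det (Pi.evalRingHom F i) _
    rw [h2]
    exact hdet i
  · intro l j hj
    have hdiv : ∀ a, DD l (π fun i => ξ i a) / (π fun i => ξ i a) = π fun i => D i l (ξ i a) / ξ i a := by
      intro a
      rw [div_eq_iff (hne _ fun i => hξ i a), ← map_mul, hDD]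
      congr 1
      ext i
      rw [piDer_apply, Pi.mul_apply, div_mul_cancel₀ _ (hξ i a)]
    simp only [hdiv, ← map_mul, ← map_sum]
    apply hall
    intro i
    rw [Finset.sum_apply]
    exact hsum i l j hj
  · intro f
    have h1 : aeval (fun a => π fun i => ξ i a) f = π (aeval (fun a => fun i => ξ i a) f) := by
      rw [← AlgHom.comp_apply, comp_aeval]
    have h2 : ∀ i, (aeval (fun a => fun i => ξ i a) f : ∀ i, F i) i = aeval (ξ i) f := by
      intro i
      have h3 := DFunLike.congr_fun (comp_aeval (R := k) (fun a => fun i => ξ i a) (Pi.evalAlgHom k F i)) f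
      exact h3
    rw [h1, h0]
    simp only [h2]

section
variable {n : ℕ}

theorem anom_closure {X : Set (TorusPt n)} (hX : ZClosed X) (s : ℕ) (p : TorusPt n)
    (hp : IS (⋃ (Y : Set (TorusPt n)) (_ : IsAnomalous X Y s), Y) ≤ mp p) :
    ∃ Y, IsAnomalous X Y s ∧ p ∈ Y := by
  classical
  let Q : Finset (Fin n) × Finset (Fin n) → Set (TorusPt n) → Prop := fun EP Y =>
    1 ≤ EP.1.card ∧ s < EP.1.card + EP.2.card ∧ ∃ h : IsAnomalous X Y s,
      (haveI := IS_prime h.2.2.1; AxData Qbar (gp (IS Y)) EP.1 EP.2)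
  have h1 : (Finset.univ.inf fun EP => IS (⋃ (Y : Set (TorusPt n)) (_ : Q EP Y), Y)) ≤ mp p := by
    refine le_trans ?_ hp
    intro f hf
    rw [Submodule.mem_finsetInf] at hf
    rw [mem_IS]
    intro x hx
    simp only [Set.mem_iUnion] at hx
    obtain ⟨Y, hY, hxY⟩ := hx
    obtain ⟨E, P, h1, h2, h3⟩ := axdata_of_anom hY
    refine mem_IS.1 (hf (E, P) (Finset.mem_univ _)) x ?_
    simp only [Set.mem_iUnion]
    exact ⟨Y, ⟨h1, h2, hY, h3⟩, hxY⟩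
  rw [Ideal.IsPrime.inf_le' inferInstance] at h1
  obtain ⟨⟨E, P⟩, -, h1⟩ := h1
  let ι := {Y // Q (E, P) Y}
  have hpr : ∀ i : ι, (IS i.1).IsPrime := fun i => IS_prime i.2.2.2.1.2.2.1
  let A : PR n → Set ι := fun g => {i | g ∉ IS i.1}
  have hA : ∀ g, g ∉ mp p → (A g).Nonempty := by
    intro g hg
    by_contra hcon
    rw [Set.not_nonempty_iff_eq_empty] at hcon
    apply hg
    apply h1
    rw [mem_IS]
    intro x hx
    simp only [Set.mem_iUnion] at hx
    obtain ⟨Y, hY, hxY⟩ := hx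
    have : (⟨Y, hY⟩ : ι) ∉ A g := by rw [hcon]; simp
    have h2 : g ∈ IS Y := by
      by_contra h; exact this h
    exact mem_IS.1 h2 x hxY
  let G : Filter ι := ⨅ g : {g : PR n // g ∉ mp p}, Filter.principal (A g.1)
  haveI hne1 : Nonempty {g : PR n // g ∉ mp p} := ⟨1, fun h => (inferInstance : (mp p).IsPrime).ne_top
    ((Ideal.eq_top_iff_one _).2 h)⟩
  haveI hGne : G.NeBot := by
    apply Filter.iInf_neBot_of_directed'
    · rintro ⟨g, hg⟩ ⟨g', hg'⟩
      refine ⟨⟨g * g', fun h => ((inferInstance : (mp p).IsPrime).mem_or_mem h).elim hg hg'⟩, ?_, ?_⟩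
      · simp only [ge_iff_le, Filter.le_principal_iff, Filter.mem_principal]
        exact fun i hi h => hi (Ideal.mul_mem_right _ _ h)
      · simp only [ge_iff_le, Filter.le_principal_iff, Filter.mem_principal]
        exact fun i hi h => hi (Ideal.mul_mem_left _ _ h)
    · intro g
      rw [Filter.principal_neBot_iff]
      exact hA _ g.2
  let U : Ultrafilter ι := Ultrafilter.of G
  have hU : ∀ g, g ∉ mp p → ∀ᶠ i : ι in U, g ∉ IS i.1 := by
    intro g hg
    exact Ultrafilter.of_le G (Filter.mem_iInf_of_mem ⟨g, hg⟩ (Filter.mem_principal_self _))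
  obtain ⟨L, _, _, ζ, hax, hζ⟩ := ultra_ax (k := Qbar) U
    (fun i : ι => FractionRing (PR n ⧸ IS i.1)) (fun i : ι => gp (IS i.1)) E P (fun i : ι => i.2.2.2.2)
  simp only [aeval_gp_eq_zero] at hζ
  haveI : CharZero L := charZero_of_injective_algebraMap (algebraMap Qbar L).injective
  let q : Ideal (PR n) := RingHom.ker (aeval (R := Qbar) ζ)
  haveI : q.IsPrime := RingHom.ker_isPrime _
  have hq : ∀ f : PR n, aeval ζ f = 0 ↔ f ∈ q := fun f => Iff.rfl
  have hqp : q ≤ mp p := by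
    intro f hf
    by_contra hcon
    obtain ⟨i, hi, hi'⟩ := ((hU f hcon).and ((hζ f).1 hf)).exists
    exact hi hi'
  have hXq : IS X ≤ q := by
    intro f hf
    exact (hζ f).2 (.of_forall fun i => IS_anti i.2.2.2.1.1 hf)
  obtain ⟨ρ, m, hm, hd1, hd2⟩ := ax_ineq ζ E P hax
  have hζ0 := hax.1
  have hg0 := gp_ne (X_not_of_le hqp)
  have hle : td Qbar (Set.range fun j => tmon (gp q) (m j)) ≤ td Qbar (Set.range fun j => tmon ζ (m j)) := by
    apply td_Mono
    intro f hf
    obtain ⟨N, g, hg⟩ := clear_denom m f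
    have h3 := hg L ζ hζ0
    rw [hf, mul_zero, hq, ← aeval_gp_eq_zero, hg _ _ hg0] at h3
    exact (mul_eq_zero.1 h3).resolve_left (pow_ne_zero _ (Finset.prod_ne_zero_iff.2 fun i _ => hg0 i))
  rw [← dq_eq q ζ hq] at hd1 hd2
  obtain ⟨q', hq', hqq', hq'p, hrel, hdq⟩ := lemA m p _ q hqp rfl
  have hX' := X_not_of_le hq'p
  obtain ⟨i0⟩ : Nonempty ι := ⟨(hA 1 fun h => (inferInstance : (mp p).IsPrime).ne_top
    ((Ideal.eq_top_iff_one _).2 h)).some⟩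
  have hE1 : 1 ≤ E.card := i0.2.1
  have hEP : s < E.card + P.card := i0.2.2.1
  refine ⟨ZV q', ⟨?_, ZClosed_ZV _, ZIrred_ZV q' hX', ?_,
    {x | ∀ j, tmon (cp x) (m j) = tmon (cp p) (m j)}, coset_is m p, ?_, ?_⟩, hq'p⟩
  · rw [← ZV_IS hX]
    exact ZV_anti (hXq.trans hqq')
  · rw [zdim_ZV q' hX']
    omega
  · intro x hx j
    exact relp_mp.1 (hx (hrel j))
  · rw [zdim_ZV q' hX']
    have := coset_le m hm p
    omega

theorem final_aux (X : Set (TorusPt n)) (hXcl : ZClosed X) (s : ℕ) :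
    ∃ Z : Set (TorusPt n), ZClosed Z ∧ openAnom X s = X \ Z := by
  refine ⟨ZV (IS (⋃ (Y : Set (TorusPt n)) (_ : IsAnomalous X Y s), Y)), ZClosed_ZV _, ?_⟩
  rw [openAnom]
  congr 1
  apply Set.Subset.antisymm
  · intro x hx f hf
    exact mem_IS.1 hf x hx
  · intro x hx
    obtain ⟨Y, hY, hxY⟩ := anom_closure hXcl s x hx
    simp only [Set.mem_iUnion]
    exact ⟨Y, hY, hxY⟩
end

end

end

/-- `X^{oa}` is a Zariski open subset of `X`. -/
theorem openAnom_is_open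
    (n : ℕ) (X : Set (TorusPt n)) (hXcl : ZClosed X) (hXirr : ZIrred X) :
    ∃ Z : Set (TorusPt n), ZClosed Z ∧ openAnom X (zdim X) = X \ Z := by
  exact final_aux X hXcl (zdim X)

end
end

section
/- Let H be an algebraic subgroup of G_m^n. Then there exists a free lattice L = Σ_{j=1}^r ℤ(a_{1j},...,a_{nj}) ⊆ ℤ^n such that H is defined by the equations x_1^{a_{1j}}···x_n^{a_{nj}} = 1 for j = 1,...,r, and H is connected if and only if L is primitive. -/
noncomputable section

/-- The lattice `L` is primitive (saturated) in `ℤⁿ`: `ℚL ∩ ℤⁿ = L`. -/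
def LatSat {n : ℕ} (L : Submodule ℤ (Fin n → ℤ)) : Prop :=
  ∀ (v : Fin n → ℤ) (k : ℤ), k ≠ 0 → k • v ∈ L → v ∈ L

section Helpers

variable {n : ℕ}

/-- The monomial `x ^ v`. -/
def mon (x : TorusPt n) (v : Fin n → ℤ) : Qbarˣ := ∏ i, x i ^ v i

lemma mon_add (x : TorusPt n) (v w : Fin n → ℤ) : mon x (v + w) = mon x v * mon x w := by
  simp [mon, zpow_add, Finset.prod_mul_distrib]

lemma mon_zero (x : TorusPt n) : mon x 0 = 1 := by simp [mon]

lemma mon_mul (x y : TorusPt n) (v : Fin n → ℤ) : mon (x * y) v = mon x v * mon y v := by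
  simp [mon, mul_zpow, Finset.prod_mul_distrib]

lemma mon_one (v : Fin n → ℤ) : mon (1 : TorusPt n) v = 1 := by simp [mon]

lemma mon_smul (x : TorusPt n) (k : ℤ) (v : Fin n → ℤ) : mon x (k • v) = mon x v ^ k := by
  simp [mon, ← Finset.prod_zpow, mul_comm k, zpow_mul]

lemma mon_single (x : TorusPt n) (i : Fin n) : mon x (Pi.single i 1) = x i := by
  rw [mon, Finset.prod_eq_single i]
  · simp
  · intro j _ hj
    simp [Pi.single_eq_of_ne hj]
  · simp

/-- The lattice of characters trivial on `H`. -/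
def ann (H : Set (TorusPt n)) : Submodule ℤ (Fin n → ℤ) where
  carrier := {v | ∀ x ∈ H, mon x v = 1}
  zero_mem' := fun x _ => mon_zero x
  add_mem' := fun {v w} hv hw x hx => by rw [mon_add, hv x hx, hw x hx, one_mul]
  smul_mem' := fun k v hv x hx => by rw [mon_smul, hv x hx, one_zpow]

lemma mem_ann {H : Set (TorusPt n)} {v : Fin n → ℤ} : v ∈ ann H ↔ ∀ x ∈ H, mon x v = 1 := Iff.rfl

/-- Evaluation of characters at `x`. -/
def evx (x : TorusPt n) : (Fin n → ℤ) →+ Additive Qbarˣ where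
  toFun v := Additive.ofMul (mon x v)
  map_zero' := by rw [mon_zero]; rfl
  map_add' v w := by rw [mon_add]; rfl

/-- Evaluation at `x` on the quotient. -/
def evq (L : Submodule ℤ (Fin n → ℤ)) (x : TorusPt n) (hx : ∀ v ∈ L, mon x v = 1) :
    ((Fin n → ℤ) ⧸ L) →ₗ[ℤ] Additive Qbarˣ :=
  L.liftQ (evx x).toIntLinearMap (fun v hv => by
    rw [LinearMap.mem_ker]
    exact congrArg Additive.ofMul (hx v hv))

/-- Evaluation at `x` as a multiplicative character. -/
def chr (L : Submodule ℤ (Fin n → ℤ)) (x : TorusPt n) (hx : ∀ v ∈ L, mon x v = 1) :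
    Multiplicative ((Fin n → ℤ) ⧸ L) →* Qbar where
  toFun q := ((Additive.toMul (evq L x hx (Multiplicative.toAdd q)) : Qbarˣ) : Qbar)
  map_one' := by simp
  map_mul' q r := by simp

lemma chr_mk (L : Submodule ℤ (Fin n → ℤ)) (x : TorusPt n) (hx : ∀ v ∈ L, mon x v = 1)
    (v : Fin n → ℤ) :
    chr L x hx (Multiplicative.ofAdd (Submodule.Quotient.mk v)) = (mon x v : Qbar) := rfl

/-- Polynomials map to the group algebra of the quotient. -/
def psi (L : Submodule ℤ (Fin n → ℤ)) :
    MvPolynomial (Fin n) Qbar →ₐ[Qbar] AddMonoidAlgebra Qbar ((Fin n → ℤ) ⧸ L) :=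
  MvPolynomial.aeval fun i => AddMonoidAlgebra.single (Submodule.Quotient.mk (Pi.single i 1)) 1

lemma lift_psi (L : Submodule ℤ (Fin n → ℤ)) (x : TorusPt n) (hx : ∀ v ∈ L, mon x v = 1)
    (f : MvPolynomial (Fin n) Qbar) :
    AddMonoidAlgebra.lift Qbar Qbar _ (chr L x hx) (psi L f) =
      MvPolynomial.eval (fun i => (x i : Qbar)) f := by
  have : (AddMonoidAlgebra.lift Qbar Qbar _ (chr L x hx)).comp (psi L) =
      MvPolynomial.aeval (fun i => (x i : Qbar)) := by
    apply MvPolynomial.algHom_ext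
    intro i
    simp only [psi, AlgHom.comp_apply, MvPolynomial.aeval_X, AddMonoidAlgebra.lift_single]
    rw [chr_mk, mon_single, one_smul]
  have h := DFunLike.congr_fun this f
  rw [AlgHom.comp_apply] at h
  rw [h, MvPolynomial.aeval_eq_eval]

/-- Dedekind: an element of the group algebra vanishing on `H` is zero. -/
lemma lift_inj {H : Set (TorusPt n)} (hH : IsAlgSubgroup H)
    (F : AddMonoidAlgebra Qbar ((Fin n → ℤ) ⧸ ann H))
    (hF : ∀ (x : TorusPt n) (hx : x ∈ H),
      AddMonoidAlgebra.lift Qbar Qbar _ (chr (ann H) x (fun v hv => hv x hx)) F = 0) : F = 0 := by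
  let S : Submonoid (TorusPt n) :=
    { carrier := H
      one_mem' := hH.2.1
      mul_mem' := fun {a b} ha hb => hH.2.2.1 a ha b hb }
  let c : ((Fin n → ℤ) ⧸ ann H) → (S →* Qbar) := fun q =>
    { toFun := fun x => chr (ann H) x.1 (fun v hv => hv x.1 x.2) (Multiplicative.ofAdd q)
      map_one' := by
        obtain ⟨v, rfl⟩ := Submodule.Quotient.mk_surjective _ q
        rw [chr_mk]
        simp [mon_one]
      map_mul' := fun x y => by
        obtain ⟨v, rfl⟩ := Submodule.Quotient.mk_surjective _ q
        rw [chr_mk, chr_mk, chr_mk]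
        simp [mon_mul] }
  have hc : Function.Injective c := by
    intro q r h
    obtain ⟨v, rfl⟩ := Submodule.Quotient.mk_surjective _ q
    obtain ⟨w, rfl⟩ := Submodule.Quotient.mk_surjective _ r
    rw [Submodule.Quotient.eq]
    intro x hx
    have h1 : mon x v = mon x w := Units.ext (DFunLike.congr_fun h (⟨x, hx⟩ : S))
    have h2 := mon_add x (v - w) w
    rw [sub_add_cancel, h1] at h2
    exact right_eq_mul.mp h2
  have hli := (linearIndependent_monoidHom S Qbar).comp c hc
  rw [linearIndependent_iff] at hli
  have h0 : F.coeff = 0 := by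
    apply hli
    funext x
    have := hF x.1 x.2
    rw [AddMonoidAlgebra.lift_apply] at this
    rw [Finsupp.linearCombination_apply, Finsupp.sum, Finset.sum_apply]
    exact this
  exact AddMonoidAlgebra.coeff_injective h0

lemma eq_of_ann {H : Set (TorusPt n)} (hH : IsAlgSubgroup H) (x : TorusPt n)
    (hx : ∀ v ∈ ann H, mon x v = 1) : x ∈ H := by
  obtain ⟨I, hI⟩ := hH.1
  have key : ∀ f ∈ I, MvPolynomial.eval (fun i => (x i : Qbar)) f = 0 := by
    intro f hf
    rw [← lift_psi (ann H) x hx f]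
    have : psi (ann H) f = 0 := by
      apply lift_inj hH
      intro y hy
      rw [lift_psi]
      rw [hI] at hy
      exact hy f hf
    rw [this, map_zero]
  rw [hI]
  exact key

lemma connected_of_sat {H : Set (TorusPt n)} (hH : IsAlgSubgroup H) (hs : LatSat (ann H)) :
    ZConnected H := by
  rintro Z₁ Z₂ ⟨I₁, h1⟩ ⟨I₂, h2⟩ hcov -
  have htf : IsAddTorsionFree ((Fin n → ℤ) ⧸ ann H) := by
    refine ⟨fun k hk q r h => ?_⟩
    obtain ⟨v, rfl⟩ := Submodule.Quotient.mk_surjective _ q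
    obtain ⟨w, rfl⟩ := Submodule.Quotient.mk_surjective _ r
    rw [Submodule.Quotient.eq]
    have h' : Submodule.Quotient.mk (p := ann H) (k • v) = Submodule.Quotient.mk (k • w) := h
    rw [Submodule.Quotient.eq, ← smul_sub] at h'
    refine hs (v - w) k (by exact_mod_cast hk) ?_
    rwa [natCast_zsmul]
  have hfg : AddMonoid.FG ((Fin n → ℤ) ⧸ ann H) := by
    rw [← AddGroup.fg_iff_addMonoid_fg, ← Module.Finite.iff_addGroup_fg]
    infer_instance
  by_contra! hne
  obtain ⟨hn1, hn2⟩ := hne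
  obtain ⟨x, hx, hx1⟩ := Set.not_subset.mp hn1
  obtain ⟨y, hy, hy2⟩ := Set.not_subset.mp hn2
  rw [h1] at hx1
  rw [h2] at hy2
  simp only [Set.mem_ofPred_eq, not_forall] at hx1 hy2
  obtain ⟨f, hf, hfx⟩ := hx1
  obtain ⟨g, hg, hgy⟩ := hy2
  have h0 : psi (ann H) f * psi (ann H) g = 0 := by
    rw [← map_mul]
    apply lift_inj hH
    intro z hz
    rw [lift_psi, map_mul]
    rcases hcov hz with h | h
    · rw [h1] at h
      rw [h f hf, zero_mul]
    · rw [h2] at h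
      rw [h g hg, mul_zero]
  rcases mul_eq_zero.mp h0 with h | h
  · apply hfx
    rw [← lift_psi (ann H) x (fun v hv => hv x hx), h, map_zero]
  · apply hgy
    rw [← lift_psi (ann H) y (fun v hv => hv y hy), h, map_zero]

/-- Numerator and denominator polynomials of a monomial. -/
lemma exists_num_den (v : Fin n → ℤ) : ∃ p q : MvPolynomial (Fin n) Qbar, ∀ x : TorusPt n,
    ∃ a b : Qbarˣ, MvPolynomial.eval (fun i => (x i : Qbar)) p = a ∧
      MvPolynomial.eval (fun i => (x i : Qbar)) q = b ∧ a = mon x v * b := by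
  refine ⟨∏ i, MvPolynomial.X i ^ (v i).toNat, ∏ i, MvPolynomial.X i ^ (-v i).toNat, fun x =>
    ⟨∏ i, x i ^ (v i).toNat, ∏ i, x i ^ (-v i).toNat, by simp, by simp, ?_⟩⟩
  rw [mon, ← Finset.prod_mul_distrib]
  refine Finset.prod_congr rfl fun i _ => ?_
  rw [← zpow_natCast, ← zpow_natCast, ← zpow_add]
  congr 1
  omega

lemma sat_of_connected {H : Set (TorusPt n)} (hH : IsAlgSubgroup H) (hc : ZConnected H) :
    LatSat (ann H) := by
  intro v k' hk' hv'
  obtain ⟨k, hk, hv⟩ : ∃ k : ℕ, k ≠ 0 ∧ ∀ x ∈ H, mon x v ^ k = 1 := by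
    refine ⟨k'.natAbs, by simpa using hk', fun x hx => ?_⟩
    have := hv' x hx
    rw [mon_smul] at this
    exact pow_natAbs_eq_one.mpr this
  obtain ⟨p, q, hpq⟩ := exists_num_den v
  let g : MvPolynomial (Fin n) Qbar := ∑ i ∈ Finset.range k, p ^ i * q ^ (k - 1 - i)
  have heq : g * (p - q) = p ^ k - q ^ k := geom_sum₂_mul p q k
  have hkey : ∀ x : TorusPt n, MvPolynomial.eval (fun i => (x i : Qbar)) (p - q) = 0 ↔
      mon x v = 1 := by
    intro x
    obtain ⟨a, b, ha, hb, hab⟩ := hpq x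
    rw [map_sub, ha, hb, sub_eq_zero, Units.val_inj, hab, mul_eq_right]
  have hg : ∀ x : TorusPt n, mon x v = 1 → MvPolynomial.eval (fun i => (x i : Qbar)) g ≠ 0 := by
    intro x hx
    obtain ⟨a, b, ha, hb, hab⟩ := hpq x
    rw [hx, one_mul] at hab
    simp only [g, map_sum, map_mul, map_pow, ha, hb, hab]
    rw [geom_sum₂_self]
    exact mul_ne_zero (by exact_mod_cast hk) (pow_ne_zero _ b.ne_zero)
  have hcon := hc {x | ∀ f ∈ ({p - q} : Set (MvPolynomial (Fin n) Qbar)),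
      MvPolynomial.eval (fun i => (x i : Qbar)) f = 0}
    {x | ∀ f ∈ ({g} : Set (MvPolynomial (Fin n) Qbar)),
      MvPolynomial.eval (fun i => (x i : Qbar)) f = 0} ⟨_, rfl⟩ ⟨_, rfl⟩ (by
    intro x hx
    have h1 := congrArg (MvPolynomial.eval (fun i => (x i : Qbar))) heq
    obtain ⟨a, b, ha, hb, hab⟩ := hpq x
    have h2 : a ^ k = b ^ k := by rw [hab, mul_pow, hv x hx, one_mul]
    rw [map_mul, map_sub (MvPolynomial.eval _) (p ^ k), map_pow, map_pow, ha, hb,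
      ← Units.val_pow_eq_pow_val, h2, Units.val_pow_eq_pow_val, sub_self] at h1
    rcases mul_eq_zero.mp h1 with h | h
    · right
      rintro f rfl
      exact h
    · left
      rintro f rfl
      exact h) (by
    rw [Set.eq_empty_iff_forall_notMem]
    rintro x ⟨⟨-, h1⟩, h2⟩
    exact hg x ((hkey x).mp (h1 _ rfl)) (h2 g rfl))
  rcases hcon with h | h
  · intro x hx
    exact (hkey x).mp (h hx _ rfl)
  · exact absurd (h hH.2.1 g rfl) (hg 1 (mon_one v))

end Helpers

/-- Every algebraic subgroup of `G_m^n` is cut out by a free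
lattice of characters, and it is connected iff the lattice is primitive. -/
theorem algebraic_subgroup_lattice
    (n : ℕ) (H : Set (TorusPt n)) (hH : IsAlgSubgroup H) :
    ∃ (r : ℕ) (a : Fin r → Fin n → ℤ), LinearIndependent ℤ a ∧
      H = {x : TorusPt n | ∀ j, ∏ i, x i ^ a j i = 1} ∧
      (ZConnected H ↔ LatSat (Submodule.span ℤ (Set.range a))) := by
  let b := Module.finBasis ℤ (ann H)
  have hspan : Submodule.span ℤ (Set.range fun j => (b j : Fin n → ℤ)) = ann H := by
    have h := congrArg (Submodule.map (ann H).subtype) b.span_eq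
    rw [Submodule.map_span, Submodule.map_top, Submodule.range_subtype, ← Set.range_comp] at h
    exact h
  refine ⟨_, fun j => (b j : Fin n → ℤ), ?_, ?_, ?_⟩
  · exact b.linearIndependent.map' (ann H).subtype (Submodule.ker_subtype _)
  · ext x
    refine ⟨fun hx j => (b j).2 x hx, fun hx => eq_of_ann hH x ?_⟩
    have : Submodule.span ℤ (Set.range fun j => (b j : Fin n → ℤ)) ≤ ann {x} := by
      rw [Submodule.span_le]
      rintro _ ⟨j, rfl⟩ y rfl
      exact hx j
    rw [hspan] at this
    exact fun v hv => this hv x rfl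
  · rw [hspan]
    exact ⟨sat_of_connected hH, connected_of_sat hH⟩

end
end

section
/- (Schlickewei; as used in the paper) For every positive integer r there is a constant c_r > 0 with the following property: every finitely generated multiplicative subgroup of ℚ̄* whose torsion-free part has rank r admits generators g_1,...,g_r of its torsion-free part such that for all integers b_1,...,b_r one has h(g_1^{b_1}···g_r^{b_r}) ≥ c_r(|b_1| h(g_1) + ... + |b_r| h(g_r)). -/
noncomputable section

/-- `g 0, ..., g (r-1)` are generators of the torsion-free part of `Γ`:
every element of `Γ` is uniquely a root of unity times a product of integer
powers of the `g j`. -/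
def IsFreePart {r : ℕ} (Γ : Subgroup Qbarˣ) (g : Fin r → Qbarˣ) : Prop :=
  (∀ j, g j ∈ Γ) ∧ ∀ x ∈ Γ, ∃! m : Fin r → ℤ,
    ∃ ζ : Qbarˣ, ζ ∈ Γ ∧ (∃ k : ℕ, 1 ≤ k ∧ ζ ^ k = 1) ∧ x = ζ * ∏ j, g j ^ m j

section
open NumberField Height Polynomial

lemma sch_fib {K : Type*} [Field K] [NumberField K] [IsGalois ℚ K] (x : K) :
    ∃ m : ℕ, (Finset.univ.val.map (fun σ : K ≃ₐ[ℚ] K => σ x)) = m • (minpoly ℚ x).aroots K := by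
  classical
  refine ⟨(Finset.univ.filter (fun σ : K ≃ₐ[ℚ] K => σ x = x)).card, ?_⟩
  have hxint : IsIntegral ℚ x := Algebra.IsIntegral.isIntegral x
  ext y
  rw [Multiset.count_nsmul, Multiset.count_map]
  have hnd : ((minpoly ℚ x).aroots K).Nodup :=
    Polynomial.nodup_aroots_iff_of_splits (minpoly.ne_zero hxint)
      (Normal.splits (inferInstance : Normal ℚ K) x) |>.2 (Algebra.IsSeparable.isSeparable ℚ x)
  rw [Multiset.count_eq_of_nodup hnd]
  split_ifs with h
  · rw [← isConjRoot_iff_mem_minpoly_aroots hxint] at h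
    rw [mul_one]
    obtain ⟨τ, hτ⟩ := isConjRoot_iff_exists_algEquiv.1 h
    change (Finset.univ.filter _).card = _
    refine Finset.card_bij' (fun σ _ => τ * σ) (fun σ _ => τ⁻¹ * σ) ?_ ?_ ?_ ?_
    · intro σ hσ
      simp at hσ ⊢
      rw [← hσ, hτ]
    · intro σ hσ
      simp at hσ ⊢
      rw [hσ, ← hτ]
      exact (τ.symm_apply_apply y).symm
    · intros; simp
    · intros; simp
  · rw [← isConjRoot_iff_mem_minpoly_aroots hxint] at h
    rw [mul_zero, Multiset.card_eq_zero, Multiset.filter_eq_nil]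
    intro σ _ hy
    exact h (isConjRoot_iff_exists_algEquiv.2 ⟨σ.symm, by rw [hy]; simp⟩)

lemma sch_gauss_X_sub_C {K : Type*} [Field K] (v : AbsoluteValue K ℝ) (a : K) :
    (X - C a).gaussNorm v 1 = max 1 (v a) := by
  apply le_antisymm
  · obtain ⟨i, hi⟩ := (X - C a).exists_eq_gaussNorm v 1
    rw [hi, one_pow, mul_one]
    rcases i with _ | _ | i
    · simp
    · simp [coeff_X]
    · simp [coeff_X]
  · have h0 := (X - C a).le_gaussNorm v zero_le_one 0
    have h1 := (X - C a).le_gaussNorm v zero_le_one 1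
    simp [coeff_X, coeff_C] at h0 h1
    exact max_le h1 h0

lemma sch_gauss_prod {K : Type*} [Field K] (v : AbsoluteValue K ℝ) (hv : IsNonarchimedean v)
    (s : Multiset K) :
    Real.log ((s.map (fun a => X - C a)).prod.gaussNorm v 1) =
      (s.map (fun a => Real.log (max 1 (v a)))).sum := by
  induction s using Multiset.induction_on with
  | empty => simp [← C_1, -map_one]
  | cons a s ih =>
    have h : (s.map (fun a => X - C a)).prod.gaussNorm v 1 ≠ 0 := by
      rw [Ne, gaussNorm_eq_zero_iff v _ (fun x hx => (AbsoluteValue.eq_zero v).mp hx) one_pos]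
      exact (monic_multiset_prod_of_monic _ _ (fun a _ => monic_X_sub_C a)).ne_zero
    rw [Multiset.map_cons, Multiset.prod_cons, gaussNorm_mul hv one_pos, sch_gauss_X_sub_C,
      Real.log_mul (by positivity) h, ih]
    simp

lemma sch_den {K : Type*} [Field K] [NumberField K] (v : FinitePlace K) (f : ℚ[X]) (hf : f.Monic)
    (D : ℕ) (hD : D = f.support.lcm fun i => (f.coeff i).den) :
    v (D : K) * (f.map (algebraMap ℚ K)).gaussNorm v.val 1 = 1 := by
  have hv : IsNonarchimedean (v ·) := FinitePlace.add_le v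
  have H (n : ℤ) : v (n : K) ≤ 1 := IsNonarchimedean.apply_intCast_le_one hv
  have hD0 : D ≠ 0 := by
    rw [hD, Ne, Finset.lcm_eq_zero_iff]
    simp
  have hdvd (i : ℕ) : (f.coeff i).den ∣ D := by
    by_cases hi : i ∈ f.support
    · rw [hD]; exact Finset.dvd_lcm (f := fun i => (f.coeff i).den) hi
    · rw [notMem_support_iff.1 hi]; simp
  have hxint (i : ℕ) : ∃ n : ℤ, (n : ℚ) = D * f.coeff i := by
    obtain ⟨k, hk⟩ := hdvd i
    refine ⟨k * (f.coeff i).num, ?_⟩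
    rw [hk]
    push_cast
    rw [mul_comm _ (k : ℚ), mul_assoc, Rat.den_mul_eq_num]
  choose n hn using hxint
  have hnK (i : ℕ) : v (D : K) * v.val ((f.map (algebraMap ℚ K)).coeff i) = v (n i : K) := by
    rw [← FinitePlace.coe_apply, ← map_mul, coeff_map]
    congr 1
    have := congrArg (algebraMap ℚ K) (hn i)
    simpa using this.symm
  have hD1 : 0 < v (D : K) := FinitePlace.pos_iff.2 (by exact_mod_cast hD0)
  apply le_antisymm
  · obtain ⟨i, hi⟩ := (f.map (algebraMap ℚ K)).exists_eq_gaussNorm v.val 1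
    rw [hi, one_pow, mul_one, hnK]
    exact H _
  · by_contra! hlt
    have hall (i : ℕ) : v (n i : K) < 1 := by
      refine lt_of_le_of_lt ?_ hlt
      rw [← hnK]
      have := (f.map (algebraMap ℚ K)).le_gaussNorm v.val zero_le_one i
      rw [one_pow, mul_one] at this
      gcongr
    let I : Ideal ℤ :=
      { carrier := {k | v (k : K) < 1}
        add_mem' := by
          intro a b ha hb
          simp only [Set.mem_ofPred_eq] at *
          push_cast
          exact lt_of_le_of_lt (hv _ _) (max_lt ha hb)
        zero_mem' := by simp
        smul_mem' := by
          intro c a ha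
          simp only [Set.mem_ofPred_eq, smul_eq_mul] at *
          push_cast
          rw [map_mul]
          exact lt_of_le_of_lt (mul_le_of_le_one_left (apply_nonneg v _) (H c)) ha }
    obtain ⟨e, he⟩ := (IsPrincipalIdealRing.principal I).principal
    have hed (i : ℕ) : e ∣ n i := by
      have : n i ∈ I := hall i
      rw [he] at this
      exact Ideal.mem_span_singleton.1 this
    have heD : e ∣ (D : ℤ) := by
      have h := hed f.natDegree
      have : n f.natDegree = (D : ℤ) := by
        have h2 := hn f.natDegree
        rw [hf.coeff_natDegree, mul_one] at h2
        exact_mod_cast h2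
      rwa [this] at h
    obtain ⟨q, hq⟩ := heD
    have hq0 : (q : ℚ) ≠ 0 := by
      intro h
      have : q = 0 := by exact_mod_cast h
      rw [this] at hq
      simp at hq
      exact hD0 hq
    have he0 : (e : ℚ) ≠ 0 := by
      intro h
      have : e = 0 := by exact_mod_cast h
      rw [this] at hq
      simp at hq
      exact hD0 hq
    have hDq : D ∣ q.natAbs := by
      rw [hD]
      apply Finset.lcm_dvd
      intro i _
      obtain ⟨t, ht⟩ := hed i
      have h1 : (q : ℚ) * f.coeff i = t := by
        have := hn i
        rw [ht] at this
        have hq' : (D : ℚ) = e * q := by exact_mod_cast hq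
        rw [hq'] at this
        push_cast at this
        apply mul_left_cancel₀ he0
        linarith
      have h2 : f.coeff i = (t : ℚ) / (q : ℚ) := by
        field_simp
        linarith
      have h3 := Rat.den_dvd t q
      rw [← Rat.intCast_div_eq_divInt, ← h2] at h3
      exact Int.natCast_dvd.1 h3
    have heu : e ∣ 1 := by
      have h1 : (D : ℤ) ∣ q := Int.natCast_dvd.2 hDq
      obtain ⟨w, hw⟩ := h1
      refine ⟨w, ?_⟩
      have hD0' : (D : ℤ) ≠ 0 := by exact_mod_cast hD0
      apply mul_left_cancel₀ hD0'
      rw [mul_one]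
      nth_rewrite 1 [hq]
      rw [hw]; ring
    have : (1 : ℤ) ∈ I := by
      rw [he]; exact Ideal.mem_span_singleton.2 heu
    have h1 : v ((1 : ℤ) : K) < 1 := this
    simp at h1

noncomputable def schHt (f : ℚ[X]) : ℝ :=
  (Real.log ((f.support.lcm fun i => (f.coeff i).den : ℕ) : ℝ) +
      ((f.aroots ℂ).map fun z => Real.log (max 1 ‖z‖)).sum) / (f.natDegree : ℝ)

lemma sch_support {K : Type*} [Field K] [NumberField K] (y : K) :
    Function.HasFiniteSupport (fun v : FinitePlace K => Real.posLog (v y)) := by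
  by_cases hy : y = 0
  · subst hy
    have : (fun v : FinitePlace K => Real.posLog (v 0)) = 0 := by
      funext v; simp
    rw [this]
    simp [Function.HasFiniteSupport]
  · refine Set.Finite.subset (FinitePlace.hasFiniteMulSupport hy) ?_
    intro v hv h1
    exact hv (by simp only at h1 ⊢; rw [h1]; simp)

lemma sch_sum_height {K : Type*} [Field K] [NumberField K] [IsGalois ℚ K] (x : K) :
    ∑ σ : K ≃ₐ[ℚ] K, logHeight₁ (σ x) = (Module.finrank ℚ K : ℝ) ^ 2 * schHt (minpoly ℚ x) := by
  classical
  obtain ⟨m, hm⟩ := sch_fib x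
  set f := minpoly ℚ x with hf
  have hxint : IsIntegral ℚ x := Algebra.IsIntegral.isIntegral x
  have hmonic : f.Monic := minpoly.monic hxint
  have hsplit : (f.map (algebraMap ℚ K)).Splits := Normal.splits (inferInstance : Normal ℚ K) x
  have hd : 0 < f.natDegree := minpoly.natDegree_pos hxint
  have hsum (F : K → ℝ) : ∑ σ : K ≃ₐ[ℚ] K, F (σ x) = m * ((f.aroots K).map F).sum := by
    have := congrArg (fun s => (s.map F).sum) hm
    simp only [Multiset.map_map, Multiset.map_nsmul, Multiset.sum_nsmul, nsmul_eq_mul] at this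
    exact this
  have hcard : (Module.finrank ℚ K : ℝ) = m * f.natDegree := by
    have := hsum (fun _ => 1)
    simp only [Finset.sum_const, Finset.card_univ, nsmul_eq_mul, mul_one, Multiset.map_const',
      Multiset.sum_replicate] at this
    rw [← Nat.card_eq_fintype_card, IsGalois.card_aut_eq_finrank] at this
    rw [this]
    congr 2
    have h2 := hsplit.natDegree_eq_card_roots
    rw [natDegree_map] at h2
    rw [h2]
  simp_rw [NumberField.logHeight₁_eq, Finset.sum_add_distrib]
  set D : ℕ := f.support.lcm fun i => (f.coeff i).den with hD
  set S : ℝ := ((f.aroots ℂ).map fun z => Real.log (max 1 ‖z‖)).sum with hS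
  have h1 : ∑ σ : K ≃ₐ[ℚ] K, ∑ v : InfinitePlace K, (v.mult : ℝ) * Real.posLog (v (σ x)) =
      Module.finrank ℚ K * (m * S) := by
    rw [Finset.sum_comm]
    simp_rw [← Finset.mul_sum]
    have (v : InfinitePlace K) : ∑ σ : K ≃ₐ[ℚ] K, Real.posLog (v (σ x)) = m * S := by
      rw [hsum (fun y => Real.posLog (v y)), hS]
      have hr : f.aroots ℂ = (f.aroots K).map v.embedding := by
        have h3 := hsplit.roots_map v.embedding
        rw [← h3, Polynomial.map_map]
        rw [RingHom.ext_rat (v.embedding.comp (algebraMap ℚ K)) (algebraMap ℚ ℂ)]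
      rw [hr, Multiset.map_map]
      congr 3
      funext y
      rw [Function.comp_apply, Real.posLog_eq_log_max_one (apply_nonneg v y), v.norm_embedding_eq]
    simp_rw [this]
    rw [← Finset.sum_mul, ← InfinitePlace.sum_mult_eq (K := K)]
    push_cast
    rfl
  have h2 : ∑ σ : K ≃ₐ[ℚ] K, ∑ᶠ v : FinitePlace K, Real.posLog (v (σ x)) =
      m * (Module.finrank ℚ K * Real.log D) := by
    rw [← finsum_sum_comm _ _ (fun σ _ => sch_support (σ x))]
    have hD0 : (D : K) ≠ 0 := by
      have : D ≠ 0 := by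
        rw [hD, Ne, Finset.lcm_eq_zero_iff]
        simp
      exact_mod_cast this
    have (v : FinitePlace K) : ∑ σ : K ≃ₐ[ℚ] K, Real.posLog (v (σ x)) =
        (-m) * Real.log (v (D : K)) := by
      rw [hsum (fun y => Real.posLog (v y))]
      have h3 := sch_den v f hmonic D hD
      have hv : IsNonarchimedean v.val := FinitePlace.add_le v
      have h4 := sch_gauss_prod v.val hv (f.aroots K)
      have h5 : ((f.aroots K).map (fun a => X - C a)).prod = f.map (algebraMap ℚ K) :=
        (hsplit.eq_prod_roots_of_monic (hmonic.map _)).symm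
      rw [h5] at h4
      have h6 : (f.map (algebraMap ℚ K)).gaussNorm v.val 1 = (v (D : K))⁻¹ :=
        eq_inv_of_mul_eq_one_right h3
      rw [h6, Real.log_inv] at h4
      have h7 : ((f.aroots K).map (fun y => Real.posLog (v y))) =
        ((f.aroots K).map fun a => Real.log (max 1 (v.val a))) := by
        congr 1
        funext y
        rw [Real.posLog_eq_log_max_one (apply_nonneg v y)]
        rfl
      rw [h7, ← h4]
      ring
    simp_rw [this]
    rw [← mul_finsum, ← Real.log_finprod, FinitePlace.prod_eq_inv_abs_norm hD0]
    · have h8 : Algebra.norm ℚ (D : K) = (D : ℚ) ^ Module.finrank ℚ K := by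
        have := Algebra.norm_algebraMap (S := K) (D : ℚ)
        simpa using this
      rw [h8]
      simp [Real.log_inv]
    · intro v; exact FinitePlace.pos_iff.2 hD0
  rw [h1, h2, schHt, ← hD, ← hS, hcard]
  field_simp
  ring

end

structure SchNorm {A : Type} [AddCommGroup A] (N : A → ℝ) : Prop where
  add : ∀ x y, N (x + y) ≤ N x + N y
  smul : ∀ (n : ℤ) x, N (n • x) = |(n : ℝ)| * N x
  fin : ∀ B : ℝ, {x | N x ≤ B}.Finite

namespace SchNorm
variable {A : Type} [AddCommGroup A] {N : A → ℝ}

lemma zero (h : SchNorm N) : N 0 = 0 := by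
  have := h.smul 0 0
  simpa using this

lemma neg (h : SchNorm N) (x : A) : N (-x) = N x := by
  have := h.smul (-1) x
  simpa using this

lemma nonneg (h : SchNorm N) (x : A) : 0 ≤ N x := by
  have h1 := h.add x (-x)
  rw [add_neg_cancel, h.zero, h.neg] at h1
  linarith

lemma pos (h : SchNorm N) [Module.IsTorsionFree ℤ A] {x : A} (hx : x ≠ 0) : 0 < N x := by
  refine lt_of_le_of_ne (h.nonneg x) (fun h0 => ?_)
  have hf := h.fin 0
  have : Function.Injective (fun n : ℤ => n • x) := smul_left_injective ℤ hx
  refine Set.infinite_range_of_injective this (hf.subset ?_)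
  rintro _ ⟨n, rfl⟩
  simp [h.smul, ← h0]

lemma exists_min (h : SchNorm N) [Nontrivial A] : ∃ g : A, g ≠ 0 ∧ ∀ x, x ≠ 0 → N g ≤ N x := by
  obtain ⟨x0, hx0⟩ := exists_ne (0 : A)
  have hf : ({x | N x ≤ N x0} ∩ {x | x ≠ 0}).Finite := (h.fin (N x0)).inter_of_left _
  obtain ⟨g, hg, hmin⟩ := Set.exists_min_image _ N hf ⟨x0, le_refl (N x0), hx0⟩
  refine ⟨g, hg.2, fun x hx => ?_⟩
  by_cases hle : N x ≤ N x0
  · exact hmin x ⟨hle, hx⟩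
  · exact hg.1.trans (not_le.1 hle).le

end SchNorm

/-- index set for the quotient norm -/
def SchIdx {A : Type} [AddCommGroup A] (M : Submodule ℤ A) (q : A ⧸ M) : Type :=
  {p : ℕ × A // M.mkQ p.2 = ((p.1 : ℤ) + 1) • q}

noncomputable def schQ {A : Type} [AddCommGroup A] (N : A → ℝ) (M : Submodule ℤ A) (q : A ⧸ M) : ℝ :=
  ⨅ p : SchIdx M q, N p.1.2 / ((p.1.1 : ℝ) + 1)

section
variable {A : Type} [AddCommGroup A] {N : A → ℝ} (M : Submodule ℤ A)

instance (q : A ⧸ M) : Nonempty (SchIdx M q) := by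
  obtain ⟨x, hx⟩ := M.mkQ_surjective q
  exact ⟨⟨(0, x), by simpa using hx⟩⟩

lemma schQ_le (h : SchNorm N) (q : A ⧸ M) (n : ℕ) (hn : 0 < n) (y : A)
    (hy : M.mkQ y = (n : ℤ) • q) : schQ N M q ≤ N y / n := by
  obtain ⟨k, rfl⟩ : ∃ k, n = k + 1 := ⟨n - 1, by omega⟩
  have hb : BddBelow (Set.range (fun p : SchIdx M q => N p.1.2 / ((p.1.1 : ℝ) + 1))) := by
    refine ⟨0, ?_⟩
    rintro _ ⟨p, rfl⟩
    exact div_nonneg (h.nonneg _) (by positivity)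
  have := ciInf_le hb ⟨(k, y), by simpa using hy⟩
  simpa [schQ] using this

lemma schQ_exists (q : A ⧸ M) {t : ℝ} (ht : schQ N M q < t) :
    ∃ (n : ℕ) (y : A), 0 < n ∧ M.mkQ y = (n : ℤ) • q ∧ N y / n < t := by
  obtain ⟨p, hp⟩ := exists_lt_of_ciInf_lt ht
  exact ⟨p.1.1 + 1, p.1.2, by omega, by simpa using p.2, by simpa using hp⟩

lemma schQ_nonneg (h : SchNorm N) (q : A ⧸ M) : 0 ≤ schQ N M q :=
  le_ciInf fun _ => div_nonneg (h.nonneg _) (by positivity)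

lemma schQ_mk_le (h : SchNorm N) (x : A) : schQ N M (M.mkQ x) ≤ N x := by
  have := schQ_le M h (M.mkQ x) 1 one_pos x (by simp)
  simpa using this

lemma schQ_add (h : SchNorm N) (q q' : A ⧸ M) : schQ N M (q + q') ≤ schQ N M q + schQ N M q' := by
  refine le_of_forall_pos_lt_add fun ε hε => ?_
  obtain ⟨n, y, hn, hy, h1⟩ := schQ_exists (N := N) M q (t := schQ N M q + ε / 2) (by linarith)
  obtain ⟨m, z, hm, hz, h2⟩ := schQ_exists (N := N) M q' (t := schQ N M q' + ε / 2) (by linarith)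
  have h3 := schQ_le M h (q + q') (n * m) (by positivity) ((m : ℤ) • y + (n : ℤ) • z) (by
    rw [map_add, map_smul, map_smul, hy, hz, smul_smul, smul_smul, smul_add]
    push_cast
    rw [mul_comm (m : ℤ)])
  have h4 := h.add ((m : ℤ) • y) ((n : ℤ) • z)
  rw [h.smul, h.smul] at h4
  have h5 : N ((m : ℤ) • y + (n : ℤ) • z) / ((n * m : ℕ) : ℝ) ≤ N y / n + N z / m := by
    have hn' : (0 : ℝ) < n := by exact_mod_cast hn
    have hm' : (0 : ℝ) < m := by exact_mod_cast hm
    rw [div_add_div _ _ hn'.ne' hm'.ne']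
    push_cast at h4 ⊢
    rw [abs_of_pos hm', abs_of_pos hn'] at h4
    gcongr
    linarith
  linarith

lemma schQ_smul_le (h : SchNorm N) (k : ℤ) (q : A ⧸ M) :
    schQ N M (k • q) ≤ |(k : ℝ)| * schQ N M q := by
  rw [schQ, schQ, Real.mul_iInf_of_nonneg (abs_nonneg _)]
  refine le_ciInf fun p => ?_
  have := schQ_le M h (k • q) (p.1.1 + 1) (by omega) (k • p.1.2) (by
    rw [map_smul, p.2, smul_comm]
    push_cast
    rfl)
  rw [h.smul] at this
  push_cast at this
  rw [schQ, mul_div_assoc] at this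
  exact this

lemma schQ_smul (h : SchNorm N) (k : ℤ) (q : A ⧸ M) :
    schQ N M (k • q) = |(k : ℝ)| * schQ N M q := by
  apply le_antisymm (schQ_smul_le M h k q)
  by_cases hk : k = 0
  · subst hk; simpa using schQ_nonneg M h _
  have hk' : (0 : ℝ) < |(k : ℝ)| := by positivity
  refine le_ciInf fun p => ?_
  have := schQ_le M h q (k.natAbs * (p.1.1 + 1)) (by positivity) (k.sign • p.1.2) (by
    rw [map_smul, p.2, smul_smul, smul_smul]
    congr 1
    push_cast
    rw [← Int.sign_mul_self_eq_abs]
    ring)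
  rw [h.smul] at this
  have hs : |((k.sign : ℤ) : ℝ)| = 1 := by
    rcases lt_or_gt_of_ne hk with h | h
    · rw [Int.sign_eq_neg_one_of_neg h]; simp
    · rw [Int.sign_eq_one_of_pos h]; simp
  rw [hs, one_mul] at this
  push_cast at this
  rw [Nat.cast_natAbs, Int.cast_abs] at this
  calc _ ≤ |(k : ℝ)| * (N p.1.2 / (|(k : ℝ)| * (p.1.1 + 1))) := by gcongr
    _ = _ := by field_simp

lemma schQ_lift (h : SchNorm N) (g : A) (hg : 0 < N g) (M : Submodule ℤ A)
    (hM : M = Submodule.span ℤ {g}) (q : A ⧸ M) :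
    ∃ x : A, M.mkQ x = q ∧ N x ≤ schQ N M q + 3 / 4 * N g := by
  obtain ⟨n, y, hn, hy, h1⟩ := schQ_exists (N := N) M q (t := schQ N M q + N g / 4) (by linarith)
  obtain ⟨x0, rfl⟩ := M.mkQ_surjective q
  have hmem : (n : ℤ) • x0 - y ∈ M := by
    rw [← Submodule.ker_mkQ M, LinearMap.mem_ker, map_sub, map_smul, hy, sub_self]
  obtain ⟨k, hk⟩ := Submodule.mem_span_singleton.1 (hM ▸ hmem)
  set t : ℤ := round ((k : ℝ) / n)
  refine ⟨x0 - t • g, ?_, ?_⟩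
  · rw [map_sub, map_smul, sub_eq_self]
    have : M.mkQ g = 0 := by
      rw [← LinearMap.mem_ker, Submodule.ker_mkQ, hM]
      exact Submodule.mem_span_singleton_self g
    rw [this, smul_zero]
  · have hn' : (0 : ℝ) < n := by exact_mod_cast hn
    have e : (n : ℤ) • (x0 - t • g) = y + (k - n * t) • g := by
      rw [sub_smul, hk, smul_sub, mul_smul]; abel
    have h2 := h.add y ((k - n * t) • g)
    rw [← e, h.smul, h.smul] at h2
    have h3 : |(k : ℝ) / n - t| ≤ 1 / 2 := abs_sub_round _
    have h4 : |((k - n * t : ℤ) : ℝ)| ≤ n * (1 / 2) := by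
      have : ((k - n * t : ℤ) : ℝ) = n * ((k : ℝ) / n - t) := by
        push_cast; field_simp
      rw [this, abs_mul, abs_of_pos hn']
      gcongr
    push_cast at h2 h4
    rw [abs_of_pos hn'] at h2
    rw [div_lt_iff₀ hn'] at h1
    have h5 : (n : ℝ) * N (x0 - t • g) ≤ n * (schQ N M (M.mkQ x0) + 3 / 4 * N g) := by
      have := mul_le_mul_of_nonneg_right h4 hg.le
      nlinarith
    exact le_of_mul_le_mul_left h5 hn'

lemma schQ_norm (h : SchNorm N) (g : A) (hg : 0 < N g) :
    SchNorm (schQ N (Submodule.span ℤ {g})) where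
  add := schQ_add _ h
  smul := schQ_smul _ h
  fin B := by
    refine ((h.fin (B + 3 / 4 * N g)).image (Submodule.span ℤ {g}).mkQ).subset ?_
    intro q hq
    obtain ⟨x, hx, hle⟩ := schQ_lift h g hg _ rfl q
    exact ⟨x, by simp only [Set.mem_ofPred_eq] at hq ⊢; linarith, hx⟩

end

lemma sch_lattice (r : ℕ) : ∃ c : ℝ, 0 < c ∧ ∀ (A : Type) [AddCommGroup A] [Module.Free ℤ A]
    [Module.Finite ℤ A], Module.finrank ℤ A = r → ∀ N : A → ℝ, SchNorm N →
    ∃ b : Module.Basis (Fin r) ℤ A, ∀ a : Fin r → ℤ,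
      c * ∑ j, |(a j : ℝ)| * N (b j) ≤ N (∑ j, a j • b j) := by
  induction r with
  | zero =>
    refine ⟨1, one_pos, fun A _ _ _ hr N h => ⟨Module.finBasisOfFinrankEq ℤ A hr, fun a => ?_⟩⟩
    simp [h.zero]
  | succ r ih =>
    obtain ⟨c, hc, ih⟩ := ih
    refine ⟨1 / (1 + 2 / (c / 4)), by positivity, fun A _ _ _ hr N h => ?_⟩
    have : Nontrivial A := Module.nontrivial_of_finrank_pos (R := ℤ) (by omega)
    obtain ⟨g, hg0, hmin⟩ := h.exists_min
    have hg := h.pos hg0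
    set M := Submodule.span ℤ {g} with hM
    have hQ := schQ_norm h g hg
    have hzero (q : A ⧸ M) (hq : schQ N M q = 0) : q = 0 := by
      obtain ⟨x, hx, hle⟩ := schQ_lift h g hg _ rfl q
      by_cases hx0 : x = 0
      · rw [← hx, hx0, map_zero]
      · have := hmin x hx0
        change _ ≤ schQ N M q + _ at hle
        linarith
    have : Module.IsTorsionFree ℤ (A ⧸ M) := by
      refine Module.IsTorsionFree.of_smul_eq_zero fun k q hkq => ?_
      have h1 := hQ.smul k q
      rw [hkq, hQ.zero] at h1
      rcases mul_eq_zero.1 h1.symm with h2 | h2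
      · left; simpa using h2
      · right; exact hzero q h2
    have : Module.Free ℤ (A ⧸ M) := inferInstance
    have hgM : M.mkQ g = 0 := by
      rw [← LinearMap.mem_ker, Submodule.ker_mkQ]
      exact Submodule.mem_span_singleton_self g
    have hrank : Module.finrank ℤ (A ⧸ M) = r := by
      have h1 := Submodule.finrank_quotient_add_finrank M
      have h2 : Module.finrank ℤ M = 1 := by
        have := finrank_span_eq_card (R := ℤ) (b := fun _ : Unit => g)
          (LinearIndependent.of_subsingleton () hg0)
        rw [Set.range_const] at this
        simpa [hM] using this
      omega
    obtain ⟨b', hb'⟩ := ih (A ⧸ M) hrank (schQ N M) hQ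
    choose x hx hle using fun j => schQ_lift h g hg M hM (b' j)
    have hx' (j) : M.mkQ (x j) = b' j := hx j
    have hle' (j) : N (x j) ≤ 4 * schQ N M (b' j) := by
      have h1 : x j ≠ 0 := by
        intro h0
        have := hx' j
        rw [h0, map_zero] at this
        exact b'.ne_zero j this.symm
      have h2 := hmin _ h1
      have h3 : N (x j) ≤ schQ N M (b' j) + 3 / 4 * N g := hle j
      linarith
    have hmk (a : Fin (r + 1) → ℤ) : M.mkQ (∑ j, a j • (Fin.cons g x : Fin (r + 1) → A) j) =
        ∑ j : Fin r, a j.succ • b' j := by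
      rw [Fin.sum_univ_succ]
      simp only [Fin.cons_zero, Fin.cons_succ, map_add, map_smul, map_sum, hx', hgM, smul_zero, zero_add]
    have hli : LinearIndependent ℤ (Fin.cons g x : Fin (r + 1) → A) := by
      rw [Fintype.linearIndependent_iff]
      intro a ha
      have h1 := hmk a
      rw [ha, map_zero] at h1
      have h2 := Fintype.linearIndependent_iff.1 b'.linearIndependent _ h1.symm
      rw [Fin.sum_univ_succ] at ha
      simp [h2, hg0] at ha
      intro i
      refine Fin.cases ha h2 i
    have hsp : ⊤ ≤ Submodule.span ℤ (Set.range (Fin.cons g x : Fin (r + 1) → A)) := by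
      intro z _
      have h1 := b'.sum_repr (M.mkQ z)
      have h2 : z - ∑ j, (b'.repr (M.mkQ z) j) • x j ∈ M := by
        refine (Submodule.Quotient.mk_eq_zero M).1 ?_
        change M.mkQ _ = 0
        rw [map_sub, map_sum]
        simp only [map_smul, hx']
        rw [h1, sub_self]
      have h3 : M ≤ Submodule.span ℤ (Set.range (Fin.cons g x : Fin (r + 1) → A)) := by
        rw [hM, Submodule.span_singleton_le_iff_mem]
        exact Submodule.subset_span ⟨0, by simp⟩
      have h4 : ∑ j, (b'.repr (M.mkQ z) j) • x j ∈
          Submodule.span ℤ (Set.range (Fin.cons g x : Fin (r + 1) → A)) :=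
        Submodule.sum_mem _ fun j _ => Submodule.smul_mem _ _
          (Submodule.subset_span ⟨j.succ, by simp⟩)
      have := Submodule.add_mem _ (h3 h2) h4
      simpa using this
    refine ⟨Module.Basis.mk hli hsp, fun a => ?_⟩
    simp only [Module.Basis.mk_apply]
    have h1 := hb' (fun j => a j.succ)
    rw [← hmk] at h1
    have h2 := h1.trans (schQ_mk_le M h _)
    set T := N (∑ j, a j • (Fin.cons g x : Fin (r + 1) → A) j) with hT
    set S := ∑ j : Fin r, |(a j.succ : ℝ)| * N (x j) with hS
    have h3 : S ≤ 4 * ∑ j : Fin r, |(a j.succ : ℝ)| * schQ N M (b' j) := by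
      rw [Finset.mul_sum]
      refine Finset.sum_le_sum fun j _ => ?_
      have := mul_le_mul_of_nonneg_left (hle' j) (abs_nonneg (a j.succ : ℝ))
      linarith
    have h4 : c / 4 * S ≤ T := by
      have := mul_le_mul_of_nonneg_left h3 hc.le
      linarith
    have hNsum : N (∑ j : Fin r, a j.succ • x j) ≤ S := by
      have := Finset.le_sum_of_subadditive N h.zero.le h.add Finset.univ (fun j : Fin r => a j.succ • x j)
      simpa only [h.smul] using this
    have h5 : |(a 0 : ℝ)| * N g ≤ T + S := by
      rw [← h.smul]
      have e : a 0 • g = (∑ j, a j • (Fin.cons g x : Fin (r + 1) → A) j) +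
          -(∑ j : Fin r, a j.succ • x j) := by
        rw [Fin.sum_univ_succ]; simp
      rw [e]
      refine (h.add _ _).trans ?_
      rw [h.neg]
      linarith
    rw [Fin.sum_univ_succ]
    simp only [Fin.cons_zero, Fin.cons_succ]
    have h6 : S ≤ T / (c / 4) := by
      rw [le_div_iff₀ (by positivity)]; linarith
    rw [one_div, inv_mul_le_iff₀ (by positivity)]
    have : (1 + 2 / (c / 4)) * T = T + 2 * (T / (c / 4)) := by ring
    rw [this]
    linarith

lemma sch_prod_zpow {ι G : Type*} [CommGroup G] (s : Finset ι) (f : ι → ℤ) (x : G) :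
    ∏ i ∈ s, x ^ f i = x ^ ∑ i ∈ s, f i := by
  classical
  induction s using Finset.induction_on with
  | empty => simp
  | insert a s ha ih => rw [Finset.prod_insert ha, Finset.sum_insert ha, zpow_add, ih]

lemma sch_isAlgebraic : Algebra.IsAlgebraic ℚ Qbar := by
  have e : (DivisionRing.toRatAlgebra : Algebra ℚ Qbar) = AlgebraicClosure.instAlgebra ℚ :=
    Subsingleton.elim _ _
  rw [e]
  exact AlgebraicClosure.isAlgebraic ℚ

lemma sch_freePart {r : ℕ} {Γ : Subgroup Qbarˣ} {g₀ : Fin r → Qbarˣ} (h : IsFreePart Γ g₀)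
    (b : Module.Basis (Fin r) ℤ (Fin r → ℤ)) :
    IsFreePart Γ (fun j => ∏ i, g₀ i ^ (b j i)) ∧
    ∀ a : Fin r → ℤ, ∏ j, (∏ i, g₀ i ^ (b j i)) ^ a j = ∏ i, g₀ i ^ ((∑ j, a j • b j) i) := by
  have key (a : Fin r → ℤ) :
      ∏ j, (∏ i, g₀ i ^ (b j i)) ^ a j = ∏ i, g₀ i ^ ((∑ j, a j • b j) i) := by
    simp_rw [← Finset.prod_zpow, ← zpow_mul]
    rw [Finset.prod_comm]
    refine Finset.prod_congr rfl fun i _ => ?_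
    rw [sch_prod_zpow]
    congr 1
    simp [Finset.sum_apply, mul_comm]
  refine ⟨⟨fun j => Subgroup.prod_mem _ fun i _ => Subgroup.zpow_mem _ (h.1 i) _, ?_⟩, key⟩
  intro x hx
  obtain ⟨m, ⟨ζ, hζ, ht, hm⟩, huniq⟩ := h.2 x hx
  refine ⟨b.equivFun m, ⟨ζ, hζ, ht, ?_⟩, ?_⟩
  · rw [key, b.sum_equivFun]; exact hm
  · rintro m' ⟨ζ', hζ', ht', hm'⟩
    rw [key] at hm'
    have := huniq _ ⟨ζ', hζ', ht', hm'⟩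
    rw [← this, ← b.equivFun_symm_apply, LinearEquiv.apply_symm_apply]

lemma sch_isNorm {r : ℕ} {Γ : Subgroup Qbarˣ} {g₀ : Fin r → Qbarˣ} (h : IsFreePart Γ g₀) :
    SchNorm (fun m : Fin r → ℤ => weilHeight ((∏ i, g₀ i ^ m i : Qbarˣ) : Qbar)) := by
  classical
  have halg : Algebra.IsAlgebraic ℚ Qbar := sch_isAlgebraic
  have hclosure : IsAlgClosure ℚ Qbar := ⟨inferInstance, halg⟩
  have hnormal : Normal ℚ Qbar := inferInstance
  let F : IntermediateField ℚ Qbar :=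
    IntermediateField.adjoin ℚ (Set.range fun i => (g₀ i : Qbar))
  have hF : FiniteDimensional ℚ F :=
    IntermediateField.finiteDimensional_adjoin fun x _ => Algebra.IsIntegral.isIntegral x
  let K : IntermediateField ℚ Qbar := IntermediateField.normalClosure ℚ F Qbar
  have hK : FiniteDimensional ℚ K := inferInstance
  have : NumberField K := {}
  have hKn : Normal ℚ K := normalClosure.normal ℚ F Qbar
  have : IsGalois ℚ K := isGalois_iff.2 ⟨inferInstance, hKn⟩
  have hFK : F ≤ K := IntermediateField.le_normalClosure F
  have hmem (i : Fin r) : (g₀ i : Qbar) ∈ K :=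
    hFK (IntermediateField.subset_adjoin ℚ _ ⟨i, rfl⟩)
  let k : Fin r → K := fun i => ⟨g₀ i, hmem i⟩
  have hk0 (i : Fin r) : k i ≠ 0 := by
    intro h0
    have := congrArg (fun z : K => (z : Qbar)) h0
    exact (g₀ i).ne_zero this
  let P : (Fin r → ℤ) → K := fun m => ∏ i, k i ^ m i
  have hP (m : Fin r → ℤ) : ((∏ i, g₀ i ^ m i : Qbarˣ) : Qbar) = (P m : Qbar) := by
    simp only [P]
    rw [Units.coe_prod]
    change _ = algebraMap K Qbar _
    rw [map_prod]
    refine Finset.prod_congr rfl fun i _ => ?_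
    rw [map_zpow₀, Units.val_zpow_eq_zpow_val]
    rfl
  have hPadd (m m' : Fin r → ℤ) : P (m + m') = P m * P m' := by
    simp only [P, Pi.add_apply]
    rw [← Finset.prod_mul_distrib]
    exact Finset.prod_congr rfl fun i _ => zpow_add₀ (hk0 i) _ _
  have hPsmul (n : ℤ) (m : Fin r → ℤ) : P (n • m) = P m ^ n := by
    simp only [P, Pi.smul_apply, smul_eq_mul]
    rw [← Finset.prod_zpow]
    exact Finset.prod_congr rfl fun i _ => by rw [mul_comm, zpow_mul]
  have hn : 0 < (Module.finrank ℚ K : ℝ) ^ 2 := by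
    have : 0 < Module.finrank ℚ K := Module.finrank_pos
    positivity
  have hW (m : Fin r → ℤ) : weilHeight ((∏ i, g₀ i ^ m i : Qbarˣ) : Qbar) =
      (∑ σ : K ≃ₐ[ℚ] K, Height.logHeight₁ (σ (P m))) / (Module.finrank ℚ K : ℝ) ^ 2 := by
    rw [eq_div_iff hn.ne', mul_comm, sch_sum_height, hP]
    have : minpoly ℚ (P m : Qbar) = minpoly ℚ (P m) :=
      minpoly.algebraMap_eq (algebraMap K Qbar).injective (P m)
    rw [weilHeight, this, schHt]
  have hinj : Function.Injective P := by
    intro m m' hmm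
    have hx : ∏ i, g₀ i ^ m i ∈ Γ := Subgroup.prod_mem _ fun i _ => Subgroup.zpow_mem _ (h.1 i) _
    refine (h.2 _ hx).unique ⟨1, one_mem _, ⟨1, le_refl _, by simp⟩, by simp⟩
      ⟨1, one_mem _, ⟨1, le_refl _, by simp⟩, ?_⟩
    rw [one_mul]
    apply Units.ext
    rw [hP, hP, hmm]
  refine ⟨fun m m' => ?_, fun n m => ?_, fun B => ?_⟩
  · simp only [hW]
    rw [← add_div, ← Finset.sum_add_distrib, hPadd]
    gcongr
    rw [map_mul]
    exact Height.logHeight₁_mul_le _ _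
  · simp only [hW]
    rw [← mul_div_assoc, Finset.mul_sum, hPsmul]
    congr 1
    refine Finset.sum_congr rfl fun σ _ => ?_
    rw [map_zpow₀, Height.logHeight₁_zpow, Nat.cast_natAbs, Int.cast_abs]
  · simp only [hW]
    refine ((NumberField.finite_setOfPred_logHeight₁_le K
      (B * (Module.finrank ℚ K : ℝ) ^ 2)).preimage hinj.injOn).subset ?_
    intro m hm
    simp only [Set.mem_ofPred_eq, Set.mem_preimage] at hm ⊢
    rw [div_le_iff₀ hn] at hm
    refine le_trans ?_ hm
    exact Finset.single_le_sum (f := fun σ : K ≃ₐ[ℚ] K => Height.logHeight₁ (σ (P m)))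
      (fun σ _ => Height.zero_le_logHeight₁ _) (Finset.mem_univ (1 : K ≃ₐ[ℚ] K))

/-- Schlickewei. -/
theorem schlickewei_generators (r : ℕ) :
    ∃ c : ℝ, 0 < c ∧ ∀ Γ : Subgroup Qbarˣ, Γ.FG →
      (∃ g₀ : Fin r → Qbarˣ, IsFreePart Γ g₀) →
      ∃ g : Fin r → Qbarˣ, IsFreePart Γ g ∧
        ∀ b : Fin r → ℤ,
          c * ∑ j, |(b j : ℝ)| * weilHeight (g j : Qbar) ≤
            weilHeight ((∏ j, g j ^ b j : Qbarˣ) : Qbar) := by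
  obtain ⟨c, hc, hlat⟩ := sch_lattice r
  refine ⟨c, hc, fun Γ _ ⟨g₀, hg₀⟩ => ?_⟩
  obtain ⟨b, hb⟩ := hlat (Fin r → ℤ) (by simp) _ (sch_isNorm hg₀)
  obtain ⟨h1, h2⟩ := sch_freePart hg₀ b
  refine ⟨_, h1, fun a => ?_⟩
  have := hb a
  rw [← h2 a] at this
  exact this


end
end
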